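/- Let d ≥ 1 and let Ω ⊆ ℝ^d be an open set. There is a constant C depending only on d such that for every f ∈ L¹_loc(Ω) with var_Ω f < ∞, the dyadic local maximal function M_Ω f belongs to L¹_loc(Ω) and var_Ω (M_Ω f) ≤ C · var_Ω f. -/

import Mathlib

/-!
By the coarea formula the variation of a function on a grid is the integral over `t` of the
perimeter of its superlevel sets, and the superlevel set `{M f > t}` of a maximal function is the
union of the maximal cubes with average greater than `t`. If `{f > t}` has density bounded below in
such a cube, then the part of the boundary of the cube outside the boundary of `{f > t}` is
controlled by the perimeter of `{f > t}` inside the cube, by a trace form of the relative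
isoperimetric inequality. If the cube is sparse, then the excess of its average over `t` comes from
the values of `f` on a small set, and is charged to disjoint subcubes in which a superlevel set of
`f` at a higher level has intermediate density, so that the isoperimetric inequality applies there.
Each subcube is charged by its ancestors with weights that decay geometrically over the
generations, so that the sum of the charges is bounded by the variation of `f`.

On `ℝ^d`, averaging `f` over the cubes of side `2^(-n)` gives grid functions whose variation is at
most `d` times that of `f`. The bound passes to the maximal function over the cubes of side between
`2^(-n)` and `2^n`, and then to the limit through the difference quotients of these functions.
-/

open MeasureTheory Metric Set Filter
open scoped ENNReal Topology

noncomputable section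

/-- `ℝ^d` as Euclidean space. -/
abbrev Ed (d : ℕ) := EuclideanSpace ℝ (Fin d)

/-- A dyadic cube `∏_i [2^n m_i, 2^n (m_i + 1))`. -/
def IsDyadicCube {d : ℕ} (Q : Set (Ed d)) : Prop :=
  ∃ (n : ℤ) (m : Fin d → ℤ),
    Q = {x : Ed d | ∀ i, x i ∈ Set.Ico ((2:ℝ)^n * m i) ((2:ℝ)^n * (m i + 1))}

/-- Divergence of a vector field `φ : ℝ^d → ℝ^d`. -/
def divergence {d : ℕ} (φ : Ed d → Ed d) (x : Ed d) : ℝ :=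
  ∑ i, fderiv ℝ φ x (EuclideanSpace.single i 1) i

/-- The variation of `f` in `Ω`:
`var_Ω f = sup { ∫_Ω f · div φ : φ ∈ C¹_c(Ω; ℝ^d), |φ| ≤ 1 }`. -/
def var {d : ℕ} (Ω : Set (Ed d)) (f : Ed d → ℝ) : ℝ≥0∞ :=
  ⨆ φ ∈ {φ : Ed d → Ed d | ContDiff ℝ 1 φ ∧ HasCompactSupport φ ∧ tsupport φ ⊆ Ω ∧
      ∀ x, ‖φ x‖ ≤ 1},
    ENNReal.ofReal (∫ x in Ω, f x * divergence φ x)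

/-- The dyadic local maximal function
`M_Ω f(x) = sup { ⨍_Q f : Q dyadic cube, x ∈ Q, closure Q ⊆ Ω }`. -/
def dyadicMaxFun {d : ℕ} (Ω : Set (Ed d)) (f : Ed d → ℝ) (x : Ed d) : ℝ :=
  sSup {y : ℝ | ∃ Q : Set (Ed d), IsDyadicCube Q ∧ x ∈ Q ∧ closure Q ⊆ Ω ∧ y = ⨍ z in Q, f z}

namespace DyadicGrid

variable {d : ℕ}

/-- A cell of the integer grid: `x : Cell d` stands for the cube `s • (x + [0, 1)^d)`, the side
length `s` being fixed. -/
abbrev Cell (d : ℕ) := Fin d → ℤ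

/-- The cell sharing with `x` the face in direction `e`: the sign `e.1` and the axis `e.2`. -/
def nbr (e : ℤˣ × Fin d) (x : Cell d) : Cell d := x + Pi.single e.2 (e.1 : ℤ)

theorem nbr_one_update (j : Fin d) (z : Cell d) (t : ℤ) :
    nbr (1, j) (Function.update z j t) = Function.update z j (t + 1) := by
  ext i
  by_cases hi : i = j
  · subst hi; simp [nbr]
  · simp [nbr, hi]

theorem nbr_eq_update (e : ℤˣ × Fin d) (x : Cell d) :
    nbr e x = Function.update x e.2 (x e.2 + e.1) := by
  ext i
  by_cases hi : i = e.2
  · subst hi; simp [nbr]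
  · simp [nbr, hi]

/-- The discrete box with lower corner `a` and `N` cells along each axis. -/
def box (a : Cell d) (N : ℕ) : Finset (Cell d) :=
  Fintype.piFinset fun i => Finset.Ico (a i) (a i + N)

/-- The slab of the box `box a N` orthogonal to the axis `i` at height `c`. -/
def slab (a : Cell d) (N : ℕ) (i : Fin d) (c : ℤ) : Finset (Cell d) := {x ∈ box a N | x i = c}

/-- The variation of `u` across the faces in direction `j` between two cells of `B`. -/
def dirVar (u : Cell d → ℝ) (B : Finset (Cell d)) (j : Fin d) : ℝ :=
  ∑ x ∈ B with nbr (1, j) x ∈ B, |u (nbr (1, j) x) - u x|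

/-- The variation of `u` in the interior of the finite set of cells `B`. -/
def finVar (u : Cell d → ℝ) (B : Finset (Cell d)) : ℝ := ∑ j, dirVar u B j

/-- The variation of `u` on the line of `box a N` through `z` in direction `j`. -/
def lineVar (u : Cell d → ℝ) (a : Cell d) (N : ℕ) (j : Fin d) (z : Cell d) : ℝ :=
  ∑ t ∈ Finset.Ico (a j) (a j + N - 1),
    |u (Function.update z j (t + 1)) - u (Function.update z j t)|

section Box

variable {a x y z : Cell d} {N : ℕ} {j : Fin d}

theorem mem_box : x ∈ box a N ↔ ∀ i, a i ≤ x i ∧ x i < a i + N := by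
  simp [box, Fintype.mem_piFinset]

theorem card_box (a : Cell d) (N : ℕ) : (box a N).card = N ^ d := by
  simp [box, Fintype.card_piFinset]

theorem mem_slab {i : Fin d} {c : ℤ} : x ∈ slab a N i c ↔ x ∈ box a N ∧ x i = c :=
  Finset.mem_filter

theorem update_mem_box (hx : x ∈ box a N) {t : ℤ} (ht : t ∈ Ico (a j) (a j + N)) :
    Function.update x j t ∈ box a N := by
  refine mem_box.2 fun i => ?_
  by_cases hi : i = j
  · subst hi; simpa using ht
  · simpa [hi] using mem_box.1 hx i

theorem piecewise_mem_box (T : Finset (Fin d)) (hx : x ∈ box a N) (hy : y ∈ box a N) :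
    T.piecewise y x ∈ box a N :=
  mem_box.2 fun i => T.piecewise_cases y x (fun t => a i ≤ t ∧ t < a i + N)
    (mem_box.1 hy i) (mem_box.1 hx i)

theorem apply_mem_Ico_of_mem_box (hx : x ∈ box a N) (i : Fin d) :
    x i ∈ Ico (a i) (a i + N) :=
  mem_box.1 hx i

theorem sum_box_eq_sum_slab {M : Type*} [AddCommMonoid M] (a : Cell d) (N : ℕ) (i : Fin d)
    (h : Cell d → M) :
    ∑ x ∈ box a N, h x = ∑ c ∈ Finset.Ico (a i) (a i + N), ∑ x ∈ slab a N i c, h x :=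
  (Finset.sum_fiberwise_of_maps_to
    (fun _ hx => Finset.mem_Ico.2 (apply_mem_Ico_of_mem_box hx i)) _).symm

theorem injOn_update_slab (a : Cell d) (N : ℕ) (i : Fin d) (c : ℤ) (I : Finset ℤ) :
    Set.InjOn (fun p : Cell d × ℤ => Function.update p.1 i p.2)
      (slab a N i c ×ˢ I : Finset (Cell d × ℤ)) := by
  rintro ⟨z, t⟩ hz ⟨w, s⟩ hw h
  have hzc : z i = c := (mem_slab.1 (Finset.mem_product.1 hz).1).2
  have hwc : w i = c := (mem_slab.1 (Finset.mem_product.1 hw).1).2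
  refine Prod.ext (funext fun l => ?_) (by simpa using congrFun h i)
  by_cases hl : l = i
  · subst hl; exact hzc.trans hwc.symm
  · simpa [hl] using congrFun h l

theorem card_slab_mul_le (a : Cell d) (N : ℕ) (i : Fin d) (c : ℤ) :
    (slab a N i c).card * N ≤ N ^ d := by
  have hmaps : ∀ p ∈ slab a N i c ×ˢ Finset.Ico (a i) (a i + N),
      Function.update p.1 i p.2 ∈ box a N := fun p hp => by
    rw [Finset.mem_product, mem_slab, Finset.mem_Ico] at hp
    exact update_mem_box hp.1.1 hp.2
  simpa [card_box] using
    Finset.card_le_card_of_injOn _ hmaps (injOn_update_slab a N i c (Finset.Ico (a i) (a i + N)))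

theorem dirVar_nonneg (u : Cell d → ℝ) (B : Finset (Cell d)) (j : Fin d) : 0 ≤ dirVar u B j :=
  Finset.sum_nonneg fun _ _ => abs_nonneg _

theorem lineVar_nonneg (u : Cell d → ℝ) (a : Cell d) (N : ℕ) (j : Fin d) (z : Cell d) :
    0 ≤ lineVar u a N j z :=
  Finset.sum_nonneg fun _ _ => abs_nonneg _

end Box

/-! ### Poincaré inequalities on boxes -/

section Poincare

variable (u : Cell d → ℝ) (a : Cell d) (N : ℕ)

theorem abs_sub_le_sum_Ico (h : ℤ → ℝ) {s t : ℤ} (hst : s ≤ t) :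
    |h s - h t| ≤ ∑ r ∈ Finset.Ico s t, |h (r + 1) - h r| := by
  induction t, hst using Int.leInduction with
  | base => simp
  | succ t hst ih =>
    rw [← Finset.insert_Ico_right_eq_Ico_add_one hst, Finset.sum_insert (by simp),
      abs_sub_comm (h (t + 1))]
    linarith [abs_sub_le (h s) (h t) (h (t + 1))]

variable {u a N}

theorem abs_sub_update_le_lineVar {z : Cell d} (hz : z ∈ box a N) {j : Fin d} {t : ℤ}
    (ht : t ∈ Ico (a j) (a j + N)) :
    |u z - u (Function.update z j t)| ≤ lineVar u a N j z := by
  have hmono {s r : ℤ} (hsr : s ≤ r) (hs : a j ≤ s) (hr : r < a j + N) :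
      |u (Function.update z j s) - u (Function.update z j r)| ≤ lineVar u a N j z :=
    (abs_sub_le_sum_Ico (fun t => u (Function.update z j t)) hsr).trans <|
      Finset.sum_le_sum_of_subset_of_nonneg (Finset.Ico_subset_Ico hs (by omega))
        fun _ _ _ => abs_nonneg _
  obtain ⟨hz₁, hz₂⟩ := apply_mem_Ico_of_mem_box hz j
  rcases le_total (z j) t with hzt | htz
  · simpa using hmono hzt hz₁ ht.2
  · simpa [abs_sub_comm] using hmono htz ht.1 hz₂

theorem abs_sub_piecewise_insert_le_lineVar {x y : Cell d} (hx : x ∈ box a N) (hy : y ∈ box a N)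
    (T : Finset (Fin d)) (j : Fin d) :
    |u (T.piecewise y x) - u ((insert j T).piecewise y x)| ≤
      lineVar u a N j (T.piecewise y x) := by
  rw [Finset.piecewise_insert]
  exact abs_sub_update_le_lineVar (piecewise_mem_box T hx hy) (apply_mem_Ico_of_mem_box hy j)

variable (u a N)

theorem sum_slab_lineVar_le (j : Fin d) (c : ℤ) :
    ∑ z ∈ slab a N j c, lineVar u a N j z ≤ dirVar u (box a N) j := by
  set P := slab a N j c ×ˢ Finset.Ico (a j) (a j + N - 1) with hP
  have hmaps : P.image (fun p => Function.update p.1 j p.2) ⊆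
      {x ∈ box a N | nbr (1, j) x ∈ box a N} := by
    intro x hx
    obtain ⟨⟨z, t⟩, hzt, rfl⟩ := Finset.mem_image.1 hx
    rw [hP, Finset.mem_product, mem_slab, Finset.mem_Ico] at hzt
    obtain ⟨⟨hz, -⟩, ht₁, ht₂⟩ := hzt
    rw [Finset.mem_filter, nbr_one_update]
    exact ⟨update_mem_box hz ⟨ht₁, by omega⟩, update_mem_box hz ⟨by omega, by omega⟩⟩
  calc ∑ z ∈ slab a N j c, lineVar u a N j z
      = ∑ x ∈ P.image (fun p => Function.update p.1 j p.2), |u (nbr (1, j) x) - u x| := by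
        rw [Finset.sum_image (injOn_update_slab a N j c _), Finset.sum_product]
        simp only [lineVar, nbr_one_update]
    _ ≤ dirVar u (box a N) j :=
        Finset.sum_le_sum_of_subset_of_nonneg hmaps fun _ _ _ => abs_nonneg _

theorem sum_box_lineVar_le (j : Fin d) :
    ∑ z ∈ box a N, lineVar u a N j z ≤ N * dirVar u (box a N) j := by
  rw [sum_box_eq_sum_slab a N j]
  refine (Finset.sum_le_card_nsmul _ _ _ fun c _ => sum_slab_lineVar_le u a N j c).trans_eq ?_
  simp

variable {u a N}

theorem abs_sub_le_finVar {x y : Cell d} (hx : x ∈ box a N) (hy : y ∈ box a N) :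
    |u x - u y| ≤ finVar u (box a N) := by
  have hpath (T : Finset (Fin d)) :
      |u x - u (T.piecewise y x)| ≤ ∑ j ∈ T, dirVar u (box a N) j := by
    induction T using Finset.induction_on with
    | empty => simp
    | insert j T hj ih =>
      have hz : T.piecewise y x ∈ slab a N j (T.piecewise y x j) :=
        mem_slab.2 ⟨piecewise_mem_box T hx hy, rfl⟩
      calc |u x - u ((insert j T).piecewise y x)|
          ≤ |u x - u (T.piecewise y x)| + lineVar u a N j (T.piecewise y x) :=
            (abs_sub_le _ _ _).trans
              (by gcongr; exact abs_sub_piecewise_insert_le_lineVar hx hy T j)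
        _ ≤ ∑ i ∈ T, dirVar u (box a N) i + dirVar u (box a N) j := by
            gcongr
            exact (Finset.single_le_sum (fun z _ => lineVar_nonneg u a N j z) hz).trans
              (sum_slab_lineVar_le u a N j _)
        _ = ∑ i ∈ insert j T, dirVar u (box a N) i := by rw [Finset.sum_insert hj, add_comm]
  simpa [finVar] using hpath Finset.univ

variable (u a N)

/-- Exchanging the coordinates in `T ∋ i` between `x` and `y` maps `slab × box` bijectively onto
`box × slab`. -/
theorem sum_slab_sum_box_piecewise (g : Cell d → ℝ) {i : Fin d} (c : ℤ) {T : Finset (Fin d)}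
    (hi : i ∈ T) :
    ∑ x ∈ slab a N i c, ∑ y ∈ box a N, g (T.piecewise y x) =
      (slab a N i c).card * ∑ z ∈ box a N, g z := by
  have hswap (x y : Cell d) : T.piecewise (T.piecewise x y) (T.piecewise y x) = x := by
    ext l; by_cases hl : l ∈ T <;> simp [hl]
  calc ∑ x ∈ slab a N i c, ∑ y ∈ box a N, g (T.piecewise y x)
      = ∑ p ∈ slab a N i c ×ˢ box a N, g (T.piecewise p.2 p.1) := by rw [Finset.sum_product]
    _ = ∑ p ∈ box a N ×ˢ slab a N i c, g p.1 := by
        refine Finset.sum_nbij' (fun p => (T.piecewise p.2 p.1, T.piecewise p.1 p.2))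
          (fun p => (T.piecewise p.2 p.1, T.piecewise p.1 p.2)) ?_ ?_
          (fun p _ => Prod.ext (hswap _ _) (hswap _ _))
          (fun p _ => Prod.ext (hswap _ _) (hswap _ _)) fun _ _ => rfl
        all_goals
          rintro ⟨x, y⟩ hxy
          simp only [Finset.mem_product, mem_slab] at hxy ⊢
        · exact ⟨piecewise_mem_box T hxy.1.1 hxy.2, piecewise_mem_box T hxy.2 hxy.1.1,
            by simpa [hi] using hxy.1.2⟩
        · exact ⟨⟨piecewise_mem_box T hxy.1 hxy.2.1, by simpa [hi] using hxy.2.2⟩,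
            piecewise_mem_box T hxy.2.1 hxy.1⟩
    _ = (slab a N i c).card * ∑ z ∈ box a N, g z := by
        simp [Finset.sum_product_right]

theorem sum_slab_abs_sub_update_le (i : Fin d) (c : ℤ) :
    ∑ x ∈ slab a N i c, ∑ y ∈ box a N, |u x - u (Function.update x i (y i))| ≤
      N ^ d * dirVar u (box a N) i :=
  calc ∑ x ∈ slab a N i c, ∑ y ∈ box a N, |u x - u (Function.update x i (y i))|
      ≤ ∑ x ∈ slab a N i c, ∑ _y ∈ box a N, lineVar u a N i x := by
        refine Finset.sum_le_sum fun x hx => Finset.sum_le_sum fun y hy => ?_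
        exact abs_sub_update_le_lineVar (mem_slab.1 hx).1 (apply_mem_Ico_of_mem_box hy i)
    _ = N ^ d * ∑ x ∈ slab a N i c, lineVar u a N i x := by
        simp [card_box, Finset.mul_sum]
    _ ≤ N ^ d * dirVar u (box a N) i := by gcongr; exact sum_slab_lineVar_le u a N i c

theorem sum_slab_abs_sub_piecewise_insert_le {i : Fin d} (c : ℤ) {T : Finset (Fin d)} (hi : i ∈ T)
    (j : Fin d) :
    ∑ x ∈ slab a N i c, ∑ y ∈ box a N,
        |u (T.piecewise y x) - u ((insert j T).piecewise y x)| ≤ N ^ d * dirVar u (box a N) j :=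
  calc _ ≤ ∑ x ∈ slab a N i c, ∑ y ∈ box a N, lineVar u a N j (T.piecewise y x) :=
        Finset.sum_le_sum fun x hx => Finset.sum_le_sum fun y hy =>
          abs_sub_piecewise_insert_le_lineVar (mem_slab.1 hx).1 hy T j
    _ = (slab a N i c).card * ∑ z ∈ box a N, lineVar u a N j z :=
        sum_slab_sum_box_piecewise a N _ c hi
    _ ≤ (slab a N i c).card * (N * dirVar u (box a N) j) := by
        gcongr; exact sum_box_lineVar_le u a N j
    _ = ((slab a N i c).card * N : ℕ) * dirVar u (box a N) j := by push_cast; ring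
    _ ≤ (N ^ d : ℕ) * dirVar u (box a N) j :=
        mul_le_mul_of_nonneg_right (mod_cast card_slab_mul_le a N i c) (dirVar_nonneg u _ j)
    _ = N ^ d * dirVar u (box a N) j := by push_cast; rfl

/-- The trace form of the Poincaré inequality: `x` is joined to `y` by exchanging one coordinate at
a time, beginning with the one orthogonal to the slab. -/
theorem sum_slab_abs_sub_le (i : Fin d) (c : ℤ) :
    ∑ x ∈ slab a N i c, ∑ y ∈ box a N, |u x - u y| ≤ N ^ d * finVar u (box a N) := by
  have hpath (S : Finset (Fin d)) (hi : i ∉ S) :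
      ∑ x ∈ slab a N i c, ∑ y ∈ box a N, |u x - u ((insert i S).piecewise y x)| ≤
        N ^ d * ∑ j ∈ insert i S, dirVar u (box a N) j := by
    induction S using Finset.induction_on with
    | empty =>
      simp only [Finset.piecewise_insert, Finset.piecewise_empty, insert_empty_eq,
        Finset.sum_singleton]
      exact sum_slab_abs_sub_update_le u a N i c
    | insert j S hj ih =>
      obtain ⟨hij, hiS⟩ : i ≠ j ∧ i ∉ S := by simpa using hi
      set T := insert i S with hT
      have hjT : j ∉ T := by simp [hT, hj, hij.symm]
      rw [Finset.insert_comm, Finset.sum_insert hjT, mul_add, add_comm]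
      calc _ ≤ ∑ x ∈ slab a N i c, ∑ y ∈ box a N, (|u x - u (T.piecewise y x)| +
              |u (T.piecewise y x) - u ((insert j T).piecewise y x)|) :=
            Finset.sum_le_sum fun x _ => Finset.sum_le_sum fun y _ => abs_sub_le _ _ _
        _ ≤ _ := by
            simp only [Finset.sum_add_distrib]
            exact add_le_add (ih hiS)
              (sum_slab_abs_sub_piecewise_insert_le u a N c (Finset.mem_insert_self i S) j)
  have huniv := hpath (Finset.univ.erase i) (by simp)
  rw [Finset.insert_erase (Finset.mem_univ i)] at huniv
  simpa [finVar] using huniv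

theorem sum_box_sum_box_abs_sub_le :
    ∑ x ∈ box a N, ∑ y ∈ box a N, |u x - u y| ≤ N ^ (d + 1) * finVar u (box a N) := by
  rcases isEmpty_or_nonempty (Fin d) with _ | ⟨⟨i⟩⟩
  · simp [finVar, Subsingleton.elim _ (0 : Cell d)]
  · rw [sum_box_eq_sum_slab a N i]
    refine (Finset.sum_le_card_nsmul _ _ _ fun c _ => sum_slab_abs_sub_le u a N i c).trans_eq ?_
    simp only [Int.card_Ico, add_sub_cancel_left, Int.toNat_natCast, nsmul_eq_mul]
    ring

end Poincare

/-! ### Discrete dyadic cubes -/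

/-- The `k`-th dyadic ancestor of a cell. -/
def anc (k : ℕ) (x : Cell d) : Cell d := fun i => x i / 2 ^ k

/-- The cells contained in the dyadic cube of generation `k` and index `m`. -/
def cube (k : ℕ) (m : Cell d) : Finset (Cell d) := box (fun i => 2 ^ k * m i) (2 ^ k)

/-- The average of `f` over a discrete dyadic cube. -/
def avg (f : Cell d → ℝ) (k : ℕ) (m : Cell d) : ℝ := (∑ x ∈ cube k m, f x) / (2 ^ k) ^ d

section Cube

variable {k j : ℕ} {m p x : Cell d}

theorem mem_cube : x ∈ cube k m ↔ anc k x = m := by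
  rw [cube, mem_box, funext_iff]
  refine forall_congr' fun i => ?_
  have h : (0 : ℤ) < 2 ^ k := by positivity
  rw [anc, Int.ediv_eq_iff_of_pos h]
  push_cast
  constructor <;> rintro ⟨h₁, h₂⟩ <;> constructor <;> nlinarith

theorem card_cube (k : ℕ) (m : Cell d) : (cube k m).card = (2 ^ k) ^ d := card_box _ _

@[simp] theorem anc_zero (x : Cell d) : anc 0 x = x := by ext; simp [anc]

theorem anc_anc (k j : ℕ) (x : Cell d) : anc j (anc k x) = anc (k + j) x := by
  ext i
  simp only [anc, pow_add]
  exact Int.ediv_ediv_of_nonneg (by positivity)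

@[simp] theorem cube_zero (m : Cell d) : cube 0 m = {m} := by
  ext x; rw [mem_cube]; simp

@[simp] theorem avg_zero (f : Cell d → ℝ) (m : Cell d) : avg f 0 m = f m := by
  simp [avg]

theorem avg_mul (f : Cell d → ℝ) (k : ℕ) (m : Cell d) :
    avg f k m * (2 ^ k) ^ d = ∑ x ∈ cube k m, f x :=
  div_mul_cancel₀ _ (by positivity)

theorem cube_subset_cube (h : anc j p = m) : cube k p ⊆ cube (k + j) m := by
  intro x hx
  rw [mem_cube] at *
  rw [← anc_anc, hx, h]

theorem sum_cube_add {M : Type*} [AddCommMonoid M] (h : Cell d → M) (k j : ℕ) (m : Cell d) :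
    ∑ x ∈ cube (k + j) m, h x = ∑ p ∈ cube j m, ∑ x ∈ cube k p, h x := by
  have hmaps : ∀ x ∈ cube (k + j) m, anc k x ∈ cube j m := fun x hx => by
    rw [mem_cube] at *
    rw [anc_anc, hx]
  rw [← Finset.sum_fiberwise_of_maps_to hmaps]
  refine Finset.sum_congr rfl fun p hp => Finset.sum_congr ?_ fun _ _ => rfl
  ext x
  rw [Finset.mem_filter, mem_cube (k := k)]
  exact and_iff_right_of_imp fun hx =>
    cube_subset_cube (mem_cube.1 hp) (mem_cube.2 hx)

end Cube

/-! ### Superlevel sets -/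

/-- The indicator of the superlevel set of `f` at `t`. -/
def levelInd (f : Cell d → ℝ) (t : ℝ) (x : Cell d) : ℝ := if t < f x then 1 else 0

/-- The number of cells of `B` at which `f` exceeds `t`. -/
def supCard (f : Cell d → ℝ) (t : ℝ) (B : Finset (Cell d)) : ℕ :=
  ({x ∈ B | t < f x} : Finset _).card

/-- The superlevel set of `f` at `t` has density less than `2^{-(d+1)}` in the cube `(k, m)`. -/
def IsSparse (f : Cell d → ℝ) (t : ℝ) (k : ℕ) (m : Cell d) : Prop :=
  2 ^ (d + 1) * supCard f t (cube k m) < (2 ^ k) ^ d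

section Superlevel

variable (f : Cell d → ℝ)

theorem supCard_mono {s t : ℝ} (hst : s ≤ t) {B B' : Finset (Cell d)} (h : B ⊆ B') :
    supCard f t B ≤ supCard f s B' := by
  refine Finset.card_le_card fun x hx => ?_
  rw [Finset.mem_filter] at *
  exact ⟨h hx.1, hst.trans_lt hx.2⟩

theorem isSparse_zero_iff {t : ℝ} {m : Cell d} : IsSparse f t 0 m ↔ f m ≤ t := by
  by_cases h : t < f m
  · have : 1 < 2 ^ (d + 1) := Nat.one_lt_two_pow (Nat.succ_ne_zero d)
    simp [IsSparse, supCard, Finset.filter_singleton, h]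
  · simp [IsSparse, supCard, Finset.filter_singleton, h, not_lt.1 h]

variable {f} in
theorem IsSparse.two_mul_supCard_le {s : ℝ} {k : ℕ} {m p : Cell d} (hs : IsSparse f s (k + 1) m)
    (hp : p ∈ cube 1 m) : 2 * supCard f s (cube k p) ≤ (2 ^ k) ^ d := by
  refine le_of_mul_le_mul_left (a := 2 ^ d) ?_ (Nat.two_pow_pos d)
  calc 2 ^ d * (2 * supCard f s (cube k p)) = 2 ^ (d + 1) * supCard f s (cube k p) := by ring
    _ ≤ 2 ^ (d + 1) * supCard f s (cube (k + 1) m) := by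
        gcongr; exact supCard_mono f le_rfl (cube_subset_cube (mem_cube.1 hp))
    _ ≤ (2 ^ (k + 1)) ^ d := hs.le
    _ = 2 ^ d * (2 ^ k) ^ d := by rw [pow_succ, mul_pow, mul_comm]

theorem card_mul_supCard_le (t : ℝ) (S B : Finset (Cell d)) :
    (({x ∈ S | ¬ t < f x} : Finset _).card * supCard f t B : ℝ) ≤
      ∑ x ∈ S, ∑ y ∈ B, |levelInd f t x - levelInd f t y| := by
  calc (({x ∈ S | ¬ t < f x} : Finset _).card * supCard f t B : ℝ)
      = ∑ x ∈ S with ¬ t < f x, ∑ y ∈ B with t < f y, |levelInd f t x - levelInd f t y| := by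
        rw [supCard, ← nsmul_eq_mul, ← Finset.sum_const]
        refine Finset.sum_congr rfl fun x hx => ?_
        rw [Finset.card_eq_sum_ones, Nat.cast_sum]
        refine Finset.sum_congr rfl fun y hy => ?_
        rw [Finset.mem_filter] at hx hy
        simp [levelInd, hx.2, hy.2]
    _ ≤ ∑ x ∈ S with ¬ t < f x, ∑ y ∈ B, |levelInd f t x - levelInd f t y| := by
        gcongr
        exact Finset.filter_subset _ _
    _ ≤ ∑ x ∈ S, ∑ y ∈ B, |levelInd f t x - levelInd f t y| :=
        Finset.sum_le_sum_of_subset_of_nonneg (Finset.filter_subset _ _)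
          fun _ _ _ => Finset.sum_nonneg fun _ _ => abs_nonneg _

theorem lintegral_abs_sub_ite_lt (a b : ℝ) :
    ∫⁻ t, ENNReal.ofReal |(if t < a then (1 : ℝ) else 0) - if t < b then 1 else 0| =
      ENNReal.ofReal |a - b| := by
  wlog hab : a ≤ b generalizing a b
  · simpa only [abs_sub_comm] using this b a (le_of_not_ge hab)
  have hind : (fun t => ENNReal.ofReal |(if t < a then (1 : ℝ) else 0) - if t < b then 1 else 0|) =
      (Ico a b).indicator 1 := by
    ext t
    by_cases ha : t < a
    · simp [ha, ha.trans_le hab]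
    · by_cases hb : t < b <;> simp [ha, hb, not_lt.1 ha]
  rw [hind, lintegral_indicator_one measurableSet_Ico, Real.volume_Ico, abs_sub_comm,
    abs_of_nonneg (sub_nonneg.2 hab)]

theorem lintegral_levelInd (x y : Cell d) :
    ∫⁻ t, ENNReal.ofReal |levelInd f t x - levelInd f t y| = ENNReal.ofReal |f x - f y| :=
  lintegral_abs_sub_ite_lt _ _

theorem measurable_levelInd (x : Cell d) : Measurable fun t => levelInd f t x :=
  Measurable.ite measurableSet_Iio measurable_const measurable_const

theorem measurable_finVar_levelInd (B : Finset (Cell d)) :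
    Measurable fun t => finVar (levelInd f t) B :=
  Finset.measurable_sum _ fun _ _ => Finset.measurable_sum _ fun _ _ =>
    ((measurable_levelInd f _).sub (measurable_levelInd f _)).abs

theorem sub_supCard_mul_supCard_le (t : ℝ) (k : ℕ) (m : Cell d) :
    (((2 ^ k) ^ d - supCard f t (cube k m)) * supCard f t (cube k m) : ℝ) ≤
      (2 ^ k) ^ (d + 1) * finVar (levelInd f t) (cube k m) := by
  have hcard : ((({x ∈ cube k m | ¬ t < f x} : Finset _).card : ℕ) : ℝ) =
      (2 ^ k) ^ d - supCard f t (cube k m) := by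
    have := Finset.card_filter_add_card_filter_not (s := cube k m) (fun x => t < f x)
    rw [card_cube] at this
    rw [eq_sub_iff_add_eq', supCard]
    exact_mod_cast this
  rw [← hcard]
  refine (card_mul_supCard_le f t _ _).trans ?_
  exact_mod_cast sum_box_sum_box_abs_sub_le (levelInd f t) (fun i => 2 ^ k * m i) (2 ^ k)

variable {f} in
theorem le_finVar_of_density {t : ℝ} {k : ℕ} {m : Cell d}
    (hlow : 2 * supCard f t (cube k m) ≤ (2 ^ k) ^ d)
    (hhigh : (2 ^ k) ^ d ≤ 2 ^ (d + 1) * supCard f t (cube k m)) :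
    ((2 ^ k) ^ d : ℝ) ≤ 2 ^ (d + 2) * 2 ^ k * finVar (levelInd f t) (cube k m) := by
  have hiso := sub_supCard_mul_supCard_le f t k m
  replace hlow : (2 * supCard f t (cube k m) : ℝ) ≤ (2 ^ k) ^ d := by exact_mod_cast hlow
  replace hhigh : ((2 ^ k) ^ d : ℝ) ≤ 2 ^ (d + 1) * supCard f t (cube k m) := by
    exact_mod_cast hhigh
  set c : ℝ := (supCard f t (cube k m) : ℝ)
  set V := finVar (levelInd f t) (cube k m)
  have hc : c ≤ 2 * (2 ^ k * V) := by
    refine le_of_mul_le_mul_left (a := (2 ^ k : ℝ) ^ d / 2) ?_ (by positivity)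
    calc (2 ^ k) ^ d / 2 * c ≤ ((2 ^ k) ^ d - c) * c := by
          gcongr
          linarith
      _ ≤ (2 ^ k) ^ (d + 1) * V := hiso
      _ = (2 ^ k) ^ d / 2 * (2 * (2 ^ k * V)) := by ring
  calc ((2 ^ k) ^ d : ℝ) ≤ 2 ^ (d + 1) * c := hhigh
    _ ≤ 2 ^ (d + 1) * (2 * (2 ^ k * V)) := by gcongr
    _ = 2 ^ (d + 2) * 2 ^ k * V := by ring

variable {f} in
theorem ofReal_sub_mul_le_lintegral_finVar {k : ℕ} {m : Cell d} {s s' t : ℝ} (hs't : s' ≤ t)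
    (hlow : 2 * supCard f s (cube k m) ≤ (2 ^ k) ^ d) (hhigh : ¬ IsSparse f s' k m) :
    ENNReal.ofReal (s' - s) * (2 ^ k) ^ d ≤ 2 ^ (d + 2) * (2 ^ k *
      ∫⁻ l in Ico s t, ENNReal.ofReal (finVar (levelInd f l) (cube k m))) := by
  have hlevel : ∀ l ∈ Ico s s', ((2 ^ k) ^ d : ℝ≥0∞) ≤
      2 ^ (d + 2) * 2 ^ k * ENNReal.ofReal (finVar (levelInd f l) (cube k m)) := by
    intro l hl
    have h := ENNReal.ofReal_le_ofReal <| le_finVar_of_density (f := f) (t := l)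
      ((Nat.mul_le_mul_left 2 (supCard_mono f hl.1 subset_rfl)).trans hlow)
      ((not_lt.1 hhigh).trans (Nat.mul_le_mul_left _ (supCard_mono f hl.2.le subset_rfl)))
    rw [ENNReal.ofReal_mul (by positivity)] at h
    simpa [ENNReal.ofReal_pow, ENNReal.ofReal_mul] using h
  calc ENNReal.ofReal (s' - s) * (2 ^ k) ^ d
      = ∫⁻ _ in Ico s s', (2 ^ k) ^ d := by
        rw [setLIntegral_const, Real.volume_Ico, mul_comm]
    _ ≤ ∫⁻ l in Ico s s',
          2 ^ (d + 2) * 2 ^ k * ENNReal.ofReal (finVar (levelInd f l) (cube k m)) :=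
        setLIntegral_mono' measurableSet_Ico hlevel
    _ = 2 ^ (d + 2) * (2 ^ k *
          ∫⁻ l in Ico s s', ENNReal.ofReal (finVar (levelInd f l) (cube k m))) := by
        rw [lintegral_const_mul _ (measurable_finVar_levelInd f _).ennreal_ofReal, mul_assoc]
    _ ≤ 2 ^ (d + 2) * (2 ^ k *
          ∫⁻ l in Ico s t, ENNReal.ofReal (finVar (levelInd f l) (cube k m))) := by
        gcongr

theorem ofReal_avg_succ_sub_mul_le (k : ℕ) (m : Cell d) (s : ℝ) :
    ENNReal.ofReal (avg f (k + 1) m - s) * (2 ^ (k + 1)) ^ d ≤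
      ∑ p ∈ cube 1 m, ENNReal.ofReal (avg f k p - s) * (2 ^ k) ^ d := by
  have hcast (t : ℝ) (j : ℕ) :
      ENNReal.ofReal t * (2 ^ j) ^ d = ENNReal.ofReal (t * (2 ^ j) ^ d) := by
    rw [ENNReal.ofReal_mul' (by positivity)]; simp [ENNReal.ofReal_pow]
  have hsum : (avg f (k + 1) m - s) * (2 ^ (k + 1)) ^ d =
      ∑ p ∈ cube 1 m, (avg f k p - s) * (2 ^ k) ^ d := by
    simp only [sub_mul, avg_mul, Finset.sum_sub_distrib, sum_cube_add, Finset.sum_const, card_cube,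
      nsmul_eq_mul]
    push_cast
    ring
  simp only [hcast, hsum]
  exact Finset.le_sum_of_subadditive _ ENNReal.ofReal_zero.le
    (fun _ _ => ENNReal.ofReal_add_le) _ _

end Superlevel

/-! ### Charging the excess of an average to subcubes -/

/-- The weight with which the subcube `c = (r, p)` is charged by a cube of generation `k`, for the
levels between `s` and the average of `f` over `c`. -/
def charge (f : Cell d → ℝ) (k : ℕ) (s : ℝ) (c : ℕ × Cell d) : ℝ≥0∞ :=
  (3 / 2) ^ (k - c.1) * (2 ^ c.1 *
    ∫⁻ l in Ico s (avg f c.1 c.2), ENNReal.ofReal (finVar (levelInd f l) (cube c.1 c.2)))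

/-- `R` is a family of pairwise disjoint dyadic subcubes of the cube `(k, m)`. -/
structure IsSubfamily (k : ℕ) (m : Cell d) (R : Finset (ℕ × Cell d)) : Prop where
  sub : ∀ c ∈ R, c.1 ≤ k ∧ anc (k - c.1) c.2 = m
  disj : ∀ x, ∀ c ∈ R, ∀ c' ∈ R, anc c.1 x = c.2 → anc c'.1 x = c'.2 → c = c'

/-- The charges of the disjoint subcubes `R` of the cube `(k, m)`, computed from generation `K`,
control the excess over `s` of the average of `f` in `(k, m)`. -/
structure IsCharging (f : Cell d → ℝ) (k : ℕ) (m : Cell d) (K : ℕ) (s : ℝ)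
    (R : Finset (ℕ × Cell d)) : Prop extends IsSubfamily k m R where
  le_sum : ENNReal.ofReal (avg f k m - s) * (2 ^ k) ^ d ≤
    3 * 2 ^ (d + 2) * ∑ c ∈ R, charge f K s c

section Charging

variable {f : Cell d → ℝ} {k : ℕ} {m : Cell d} {s : ℝ}

theorem isSubfamily_biUnion {R : Cell d → Finset (ℕ × Cell d)}
    (hR : ∀ p ∈ cube 1 m, IsSubfamily k p (R p)) :
    IsSubfamily (k + 1) m ((cube 1 m).biUnion R) := by
  constructor
  · intro c hc
    obtain ⟨p, hp, hcp⟩ := Finset.mem_biUnion.1 hc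
    obtain ⟨hck, hanc⟩ := (hR p hp).sub c hcp
    refine ⟨by omega, ?_⟩
    rw [show k + 1 - c.1 = (k - c.1) + 1 by omega, ← anc_anc, hanc]
    exact mem_cube.1 hp
  · intro x c hc c' hc' hx hx'
    obtain ⟨p, hp, hcp⟩ := Finset.mem_biUnion.1 hc
    obtain ⟨p', hp', hcp'⟩ := Finset.mem_biUnion.1 hc'
    obtain ⟨hck, hanc⟩ := (hR p hp).sub c hcp
    obtain ⟨hck', hanc'⟩ := (hR p' hp').sub c' hcp'
    obtain rfl : p = p' := by
      rw [← hanc, ← hanc', ← hx, ← hx', anc_anc, anc_anc]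
      congr 1; omega
    exact (hR p hp).disj x c hcp c' hcp' hx hx'

theorem sum_biUnion_subfamily {M : Type*} [AddCommMonoid M] {R : Cell d → Finset (ℕ × Cell d)}
    (hR : ∀ p ∈ cube 1 m, IsSubfamily k p (R p)) (g : ℕ × Cell d → M) :
    ∑ c ∈ (cube 1 m).biUnion R, g c = ∑ p ∈ cube 1 m, ∑ c ∈ R p, g c := by
  refine Finset.sum_biUnion fun p hp p' hp' hne => Finset.disjoint_left.2 fun c hc hc' => hne ?_
  rw [← ((hR p hp).sub c hc).2, ← ((hR p' hp').sub c hc').2]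

theorem charge_mono (f : Cell d → ℝ) (k : ℕ) {s s' : ℝ} (h : s ≤ s') (c : ℕ × Cell d) :
    charge f k s' c ≤ charge f k s c := by
  unfold charge
  gcongr

theorem charge_succ (f : Cell d → ℝ) (s : ℝ) {c : ℕ × Cell d} (hc : c.1 ≤ k) :
    charge f (k + 1) s c = 3 / 2 * charge f k s c := by
  unfold charge
  rw [Nat.succ_sub hc, pow_succ]
  ring

theorem isCharging_empty (K : ℕ) (h : avg f k m ≤ s) : IsCharging f k m K s ∅ :=
  { sub := by simp, disj := by simp, le_sum := by simp [h] }

theorem isCharging_singleton {K : ℕ} (hs : s ≤ avg f k m)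
    (hlow : 2 * supCard f s (cube k m) ≤ (2 ^ k) ^ d)
    (hhigh : ¬ IsSparse f (s + (avg f k m - s) / 3) k m) :
    IsCharging f k m K s {(k, m)} where
  sub := by simp
  disj := by simp +contextual
  le_sum := by
    have hexc := ofReal_sub_mul_le_lintegral_finVar (t := avg f k m) (by linarith) hlow hhigh
    have hone : (1 : ℝ≥0∞) ≤ 3 / 2 := by
      rw [ENNReal.le_div_iff_mul_le (by simp) (by simp)]; norm_num
    rw [add_sub_cancel_left] at hexc
    calc ENNReal.ofReal (avg f k m - s) * (2 ^ k) ^ d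
        = 3 * (ENNReal.ofReal ((avg f k m - s) / 3) * (2 ^ k) ^ d) := by
          rw [← mul_assoc, ← ENNReal.ofReal_ofNat 3, ← ENNReal.ofReal_mul (by norm_num),
            mul_div_cancel₀ _ (by norm_num)]
      _ ≤ 3 * (2 ^ (d + 2) * charge f K s (k, m)) := by
          refine mul_le_mul_right (hexc.trans (mul_le_mul_right ?_ _)) _
          exact le_mul_of_one_le_left (by positivity) (one_le_pow₀ hone)
      _ = 3 * 2 ^ (d + 2) * ∑ c ∈ {(k, m)}, charge f K s c := by
          rw [Finset.sum_singleton, mul_assoc]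

/-- Raising the level by a third of the excess multiplies the excess by `2 / 3`, which the weight
`3 / 2` of one generation in `charge` makes up for. -/
theorem IsCharging.of_third {R : Finset (ℕ × Cell d)} (hs : s ≤ avg f k m)
    (hR : IsCharging f k m k (s + (avg f k m - s) / 3) R) : IsCharging f k m (k + 1) s R where
  toIsSubfamily := hR.toIsSubfamily
  le_sum := by
    set s' := s + (avg f k m - s) / 3 with hs'
    have hofReal : ENNReal.ofReal (3 / 2) = 3 / 2 := by
      rw [ENNReal.ofReal_div_of_pos (by norm_num)]; simp
    calc ENNReal.ofReal (avg f k m - s) * (2 ^ k) ^ d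
        = 3 / 2 * (ENNReal.ofReal (avg f k m - s') * (2 ^ k) ^ d) := by
          rw [← mul_assoc, ← hofReal, ← ENNReal.ofReal_mul (by norm_num)]
          congr 2
          rw [hs']; ring
      _ ≤ 3 / 2 * (3 * 2 ^ (d + 2) * ∑ c ∈ R, charge f k s' c) := by
          exact mul_le_mul_right hR.le_sum _
      _ = 3 * 2 ^ (d + 2) * ∑ c ∈ R, charge f (k + 1) s' c := by
          rw [Finset.sum_congr rfl fun c hc => charge_succ f s' (hR.sub c hc).1, ← Finset.mul_sum]
          ring
      _ ≤ 3 * 2 ^ (d + 2) * ∑ c ∈ R, charge f (k + 1) s c := by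
          gcongr; exact charge_mono f (k + 1) (by linarith) _

theorem isCharging_biUnion {K : ℕ} {R : Cell d → Finset (ℕ × Cell d)}
    (hR : ∀ p ∈ cube 1 m, IsCharging f k p K s (R p)) :
    IsCharging f (k + 1) m K s ((cube 1 m).biUnion R) where
  toIsSubfamily := isSubfamily_biUnion fun p hp => (hR p hp).toIsSubfamily
  le_sum := by
    rw [sum_biUnion_subfamily fun p hp => (hR p hp).toIsSubfamily, Finset.mul_sum]
    exact (ofReal_avg_succ_sub_mul_le f k m s).trans
      (Finset.sum_le_sum fun p hp => (hR p hp).le_sum)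

/-- Descend from a sparse cube to its children, raising the level, and stop at a subcube as soon as
it is no longer sparse: its parent being sparse, its density is then at most `1 / 2`. -/
theorem exists_isCharging (k : ℕ) (m : Cell d) (s : ℝ) (hs : IsSparse f s k m) :
    ∃ R, IsCharging f k m k s R := by
  induction k generalizing m s with
  | zero => exact ⟨∅, isCharging_empty _ (by simpa using (isSparse_zero_iff f).1 hs)⟩
  | succ k ih =>
    have hchild : ∀ p ∈ cube 1 m, ∃ R, IsCharging f k p (k + 1) s R := by
      intro p hp
      rcases le_total (avg f k p) s with hps | hps
      · exact ⟨∅, isCharging_empty _ hps⟩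
      by_cases hlow : IsSparse f (s + (avg f k p - s) / 3) k p
      · obtain ⟨R, hR⟩ := ih p _ hlow
        exact ⟨R, hR.of_third hps⟩
      · exact ⟨_, isCharging_singleton hps (hs.two_mul_supCard_le hp) hlow⟩
    choose! R hR using hchild
    exact ⟨_, isCharging_biUnion hR⟩

end Charging

/-! ### The variation of a grid function -/

open Classical in
/-- The contribution of the faces with lower cell `x` to the variation of `u` in the set of cells
`S`. -/
def varDensity (S : Set (Cell d)) (u : Cell d → ℝ) (x : Cell d) : ℝ≥0∞ :=
  ∑ j, if x ∈ S ∧ nbr (1, j) x ∈ S then ENNReal.ofReal |u (nbr (1, j) x) - u x| else 0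

/-- The variation of `u` in the set of cells `S`. -/
def gridVar (S : Set (Cell d)) (u : Cell d → ℝ) : ℝ≥0∞ := ∑' x, varDensity S u x

open Classical in
/-- The indicator of `a` being in the superlevel set of `u` at `t` and its neighbour in direction
`e` being outside, both cells being in `S`. -/
def crossing (S : Set (Cell d)) (u : Cell d → ℝ) (t : ℝ) (a : Cell d) (e : ℤˣ × Fin d) : ℝ≥0∞ :=
  if a ∈ S ∧ nbr e a ∈ S ∧ t < u a ∧ ¬ t < u (nbr e a) then 1 else 0

section GridVar

variable (S : Set (Cell d)) (f : Cell d → ℝ)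

theorem tsum_sum_cube (F : Cell d → Cell d → ℝ≥0∞) (k : ℕ) :
    ∑' m, ∑ x ∈ cube k m, F m x = ∑' x, F (anc k x) x := by
  classical
  have hfiber (m : Cell d) :
      ∑ x ∈ cube k m, F m x = ∑' x, if m = anc k x then F m x else 0 := by
    rw [tsum_eq_sum fun x hx => if_neg fun h => hx (mem_cube.2 h.symm)]
    exact Finset.sum_congr rfl fun x hx => (if_pos (mem_cube.1 hx).symm).symm
  simp only [hfiber]
  rw [ENNReal.tsum_comm]
  simp

theorem measurable_varDensity_levelInd (x : Cell d) :
    Measurable fun t => varDensity S (levelInd f t) x := by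
  refine Finset.measurable_sum _ fun j _ => ?_
  split_ifs
  · exact ((measurable_levelInd f _).sub (measurable_levelInd f _)).abs.ennreal_ofReal
  · exact measurable_const

theorem measurable_gridVar_levelInd : Measurable fun t => gridVar S (levelInd f t) :=
  Measurable.tsum fun x => measurable_varDensity_levelInd S f x

theorem lintegral_gridVar_levelInd : ∫⁻ t, gridVar S (levelInd f t) = gridVar S f := by
  classical
  unfold gridVar
  rw [lintegral_tsum fun x => (measurable_varDensity_levelInd S f x).aemeasurable]
  refine tsum_congr fun x => ?_
  have hmeas (j : Fin d) :
      Measurable fun t => if x ∈ S ∧ nbr (1, j) x ∈ S then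
        ENNReal.ofReal |levelInd f t (nbr (1, j) x) - levelInd f t x| else 0 := by
    split_ifs
    · exact ((measurable_levelInd f _).sub (measurable_levelInd f _)).abs.ennreal_ofReal
    · exact measurable_const
  unfold varDensity
  rw [lintegral_finsetSum _ fun j _ => hmeas j]
  refine Finset.sum_congr rfl fun j _ => ?_
  split_ifs
  · exact lintegral_levelInd f _ _
  · simp

theorem nbr_neg_one_nbr_one (j : Fin d) (x : Cell d) : nbr (-1, j) (nbr (1, j) x) = x := by
  simp [nbr, add_assoc, ← Pi.single_add]

theorem varDensity_levelInd_eq (t : ℝ) (x : Cell d) :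
    varDensity S (levelInd f t) x =
      ∑ j, (crossing S f t x (1, j) + crossing S f t (nbr (1, j) x) (-1, j)) := by
  refine Finset.sum_congr rfl fun j _ => ?_
  by_cases hx : x ∈ S <;> by_cases hn : nbr (1, j) x ∈ S <;> by_cases htx : t < f x <;>
    by_cases htn : t < f (nbr (1, j) x) <;>
    simp [crossing, nbr_neg_one_nbr_one, hx, hn, htx, htn, levelInd]

theorem gridVar_levelInd_eq (t : ℝ) :
    gridVar S (levelInd f t) = ∑' a, ∑ e, crossing S f t a e := by
  have hsum (a : Cell d) : ∑ e, crossing S f t a e =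
      ∑ j, (crossing S f t a (1, j) + crossing S f t a (-1, j)) := by
    rw [Fintype.sum_prod_type, UnitsInt.univ, Finset.sum_pair (by decide),
      Finset.sum_add_distrib]
  simp only [gridVar, varDensity_levelInd_eq, hsum]
  rw [Summable.tsum_finsetSum fun _ _ => ENNReal.summable,
    Summable.tsum_finsetSum fun _ _ => ENNReal.summable]
  refine Finset.sum_congr rfl fun j _ => ?_
  rw [ENNReal.tsum_add, ENNReal.tsum_add]
  congr 1
  exact (Equiv.addRight (Pi.single j 1)).tsum_eq fun a => crossing S f t a (-1, j)

variable {S} in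
theorem ofReal_finVar_le_sum_varDensity (u : Cell d → ℝ) {B : Finset (Cell d)}
    (hB : ∀ x ∈ B, x ∈ S) : ENNReal.ofReal (finVar u B) ≤ ∑ x ∈ B, varDensity S u x := by
  classical
  unfold finVar varDensity
  rw [ENNReal.ofReal_sum_of_nonneg (fun j _ => dirVar_nonneg u B j), Finset.sum_comm (s := B)]
  refine Finset.sum_le_sum fun j _ => ?_
  rw [dirVar, ENNReal.ofReal_sum_of_nonneg (fun _ _ => abs_nonneg _), Finset.sum_filter]
  refine Finset.sum_le_sum fun x hx => ?_
  by_cases hn : nbr (1, j) x ∈ B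
  · rw [if_pos hn, if_pos ⟨hB x hx, hB _ hn⟩]
  · simp [hn]

end GridVar

/-! ### Maximal cubes of the discrete maximal function -/

/-- A family of dyadic cubes, `A k` being the indices of its cubes of generation `k`, which is
closed under passing to subcubes and whose generations are bounded. -/
structure IsAdmissible (A : ℕ → Set (Cell d)) : Prop where
  down : ∀ k m, anc 1 m ∈ A (k + 1) → m ∈ A k
  bdd : ∃ K, ∀ k m, m ∈ A k → k ≤ K

/-- `g` is the maximal function of `f` with respect to the family of dyadic cubes `A`. -/
def IsMaxFun (A : ℕ → Set (Cell d)) (f g : Cell d → ℝ) : Prop :=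
  ∀ x ∈ A 0, ∀ t, t < g x ↔ ∃ k, anc k x ∈ A k ∧ t < avg f k (anc k x)

/-- The indices of the cubes of generation `k` that are maximal among the cubes of `A` on which the
average of `f` exceeds `t`. -/
def topCubes (A : ℕ → Set (Cell d)) (f : Cell d → ℝ) (t : ℝ) (k : ℕ) : Set (Cell d) :=
  {m | m ∈ A k ∧ t < avg f k m ∧ ∀ j, 0 < j → anc j m ∈ A (k + j) → avg f (k + j) (anc j m) ≤ t}

/-- The indices of the sparse maximal cubes of generation `k`. -/
def sparseTopCubes (A : ℕ → Set (Cell d)) (f : Cell d → ℝ) (t : ℝ) (k : ℕ) : Set (Cell d) :=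
  {m ∈ topCubes A f t k | IsSparse f t k m}

open Classical in
/-- The indicator of the face of `a` in direction `e` being a boundary face of the cube `(k, m)`
whose outer cell is in `S` and outside the superlevel set of `f` at `t`. -/
def outerFace (S : Set (Cell d)) (f : Cell d → ℝ) (t : ℝ) (k : ℕ) (m a : Cell d)
    (e : ℤˣ × Fin d) : ℝ≥0∞ :=
  if nbr e a ∈ S ∧ anc k (nbr e a) ≠ m ∧ ¬ t < f (nbr e a) then 1 else 0

section TopCubes

variable {A : ℕ → Set (Cell d)} {f g : Cell d → ℝ} {t : ℝ} {k k' : ℕ} {m x : Cell d}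

theorem IsAdmissible.mem_of_anc_mem (hA : IsAdmissible A) {j : ℕ} (h : anc j m ∈ A (k + j)) :
    m ∈ A k := by
  induction j with
  | zero => simpa using h
  | succ j ih =>
    refine ih (hA.down _ _ ?_)
    rwa [anc_anc]

theorem IsAdmissible.mem_zero (hA : IsAdmissible A) (hm : m ∈ A k) (hx : x ∈ cube k m) :
    x ∈ A 0 := by
  obtain rfl := mem_cube.1 hx
  exact hA.mem_of_anc_mem (j := k) (by rwa [zero_add])

theorem exists_anc_mem_topCubes (hA : IsAdmissible A) (hk : anc k x ∈ A k)
    (ht : t < avg f k (anc k x)) : ∃ k, anc k x ∈ topCubes A f t k := by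
  classical
  obtain ⟨K, hK⟩ := hA.bdd
  set P : ℕ → Prop := fun k => anc k x ∈ A k ∧ t < avg f k (anc k x)
  obtain ⟨hn, htn⟩ : P (Nat.findGreatest P K) := Nat.findGreatest_spec (hK _ _ hk) ⟨hk, ht⟩
  refine ⟨_, hn, htn, fun j hj hAj => ?_⟩
  rw [anc_anc] at *
  by_contra hlt
  exact Nat.findGreatest_is_greatest (Nat.lt_add_of_pos_right hj) (hK _ _ hAj) ⟨hAj, not_le.1 hlt⟩

theorem avg_le_of_mem_topCubes (h : anc k x ∈ topCubes A f t k) (hk : k < k')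
    (h' : anc k' x ∈ A k') : avg f k' (anc k' x) ≤ t := by
  have hmax := h.2.2 (k' - k) (by omega)
  rw [anc_anc, show k + (k' - k) = k' by omega] at hmax
  exact hmax h'

theorem eq_of_anc_mem_topCubes (h : anc k x ∈ topCubes A f t k)
    (h' : anc k' x ∈ topCubes A f t k') : k = k' := by
  rcases lt_trichotomy k k' with hk | hk | hk
  · exact absurd h'.2.1 (not_lt.2 (avg_le_of_mem_topCubes h hk h'.1))
  · exact hk
  · exact absurd h.2.1 (not_lt.2 (avg_le_of_mem_topCubes h' hk h.1))

theorem tsum_indicator_topCubes_le (w : ℝ≥0∞) (x : Cell d) :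
    ∑' k, (topCubes A f t k).indicator (fun _ => w) (anc k x) ≤ w := by
  by_cases h : ∃ k, anc k x ∈ topCubes A f t k
  · obtain ⟨k₀, hk₀⟩ := h
    rw [tsum_eq_single k₀ fun k hk =>
      Set.indicator_of_notMem (fun hk' => hk (eq_of_anc_mem_topCubes hk' hk₀)) _]
    exact Set.indicator_le_self' (fun _ _ => zero_le) _
  · simp [not_exists.1 h]

theorem tsum_indicator_sum_cube (T : ℕ → Set (Cell d)) (F : ℕ → Cell d → Cell d → ℝ≥0∞) :
    ∑' k, ∑' m, (T k).indicator (fun m => ∑ a ∈ cube k m, F k m a) m =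
      ∑' a, ∑' k, (T k).indicator (fun m => F k m a) (anc k a) := by
  have hind (k : ℕ) (m : Cell d) : (T k).indicator (fun m => ∑ a ∈ cube k m, F k m a) m =
      ∑ a ∈ cube k m, (T k).indicator (fun m => F k m a) m := by
    by_cases hm : m ∈ T k <;> simp [hm]
  simp only [hind]
  rw [ENNReal.tsum_comm (f := fun a k => (T k).indicator (fun m => F k m a) (anc k a))]
  exact tsum_congr fun k => tsum_sum_cube (fun m a => (T k).indicator (fun m => F k m a) m) k

theorem sum_crossing_le (hA : IsAdmissible A) (hg : IsMaxFun A f g) (t : ℝ) (a : Cell d) :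
    ∑ e, crossing (A 0) g t a e ≤
      ∑' k, (topCubes A f t k).indicator (fun m => ∑ e, outerFace (A 0) f t k m a e)
        (anc k a) := by
  by_cases h : a ∈ A 0 ∧ t < g a
  · obtain ⟨k₀, hk₀, ht₀⟩ := (hg a h.1 t).1 h.2
    obtain ⟨k, hk⟩ := exists_anc_mem_topCubes hA hk₀ ht₀
    refine le_trans ?_ (ENNReal.le_tsum k)
    rw [Set.indicator_of_mem hk]
    refine Finset.sum_le_sum fun e _ => ?_
    by_cases hcross : a ∈ A 0 ∧ nbr e a ∈ A 0 ∧ t < g a ∧ ¬ t < g (nbr e a)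
    · obtain ⟨-, hn, -, hgn⟩ := hcross
      rw [hg _ hn, not_exists] at hgn
      have houter : anc k (nbr e a) ≠ anc k a := fun hanc =>
        hgn k (by rw [hanc]; exact ⟨hk.1, hk.2.1⟩)
      have hfn : ¬ t < f (nbr e a) := fun hf => hgn 0 (by simpa using ⟨hn, hf⟩)
      rw [outerFace, if_pos ⟨hn, houter, hfn⟩, crossing]
      split_ifs <;> simp
    · rw [crossing, if_neg hcross]; exact zero_le
  · have hzero (e : ℤˣ × Fin d) : crossing (A 0) g t a e = 0 :=
      if_neg fun h' => h ⟨h'.1, h'.2.2.1⟩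
    simp [hzero]

end TopCubes

/-! ### Boundary faces of a cube -/

section BoundaryFaces

variable (S : Set (Cell d)) (f : Cell d → ℝ) (t : ℝ) (k : ℕ) (m : Cell d)

theorem exists_forall_apply_eq_of_anc_nbr_ne (e : ℤˣ × Fin d) :
    ∃ c, ∀ a ∈ cube k m, anc k (nbr e a) ≠ m → a e.2 = c := by
  have hinside (a : Cell d) (ha : a ∈ cube k m)
      (h : 2 ^ k * m e.2 ≤ a e.2 + e.1 ∧ a e.2 + e.1 < 2 ^ k * m e.2 + 2 ^ k) :
      anc k (nbr e a) = m := by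
    rw [nbr_eq_update]
    exact mem_cube.1 (update_mem_box ha ⟨h.1, by push_cast; exact h.2⟩)
  have hbound (a : Cell d) (ha : a ∈ cube k m) :
      2 ^ k * m e.2 ≤ a e.2 ∧ a e.2 < 2 ^ k * m e.2 + 2 ^ k := by
    exact_mod_cast mem_box.1 ha e.2
  rcases Int.units_eq_one_or e.1 with he | he
  · refine ⟨2 ^ k * m e.2 + 2 ^ k - 1, fun a ha hne => ?_⟩
    by_contra hac
    have := hbound a ha
    exact hne (hinside a ha (by rw [he]; push_cast; omega))
  · refine ⟨2 ^ k * m e.2, fun a ha hne => ?_⟩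
    by_contra hac
    have := hbound a ha
    exact hne (hinside a ha (by rw [he]; push_cast; omega))

variable {f t k m} in
theorem card_filter_slab_le_of_not_isSparse (hdense : ¬ IsSparse f t k m) (i : Fin d) (c : ℤ) :
    (({x ∈ slab (fun i => 2 ^ k * m i) (2 ^ k) i c | ¬ t < f x} : Finset _).card : ℝ) ≤
      2 ^ (d + 1) * finVar (levelInd f t) (cube k m) := by
  set n : ℝ := (({x ∈ slab (fun i => 2 ^ k * m i) (2 ^ k) i c | ¬ t < f x} : Finset _).card : ℝ)
  have htrace : n * supCard f t (cube k m) ≤ (2 ^ k) ^ d * finVar (levelInd f t) (cube k m) :=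
    (card_mul_supCard_le f t _ (cube k m)).trans
      (by exact_mod_cast sum_slab_abs_sub_le (levelInd f t) (fun i => 2 ^ k * m i) (2 ^ k) i c)
  have hcard : ((2 ^ k) ^ d : ℝ) ≤ 2 ^ (d + 1) * supCard f t (cube k m) := by
    exact_mod_cast not_lt.1 hdense
  refine le_of_mul_le_mul_left (a := (2 ^ k : ℝ) ^ d) ?_ (by positivity)
  calc (2 ^ k) ^ d * n ≤ 2 ^ (d + 1) * supCard f t (cube k m) * n := by gcongr
    _ = 2 ^ (d + 1) * (n * supCard f t (cube k m)) := by ring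
    _ ≤ 2 ^ (d + 1) * ((2 ^ k) ^ d * finVar (levelInd f t) (cube k m)) := by gcongr
    _ = (2 ^ k) ^ d * (2 ^ (d + 1) * finVar (levelInd f t) (cube k m)) := by ring

theorem card_units_int_prod_fin : Fintype.card (ℤˣ × Fin d) = 2 * d := by
  simp [Fintype.card_prod, Fintype.card_units_int]

variable {S f t k m} in
theorem sum_outerFace_le_of_not_isSparse (hS : ∀ x ∈ cube k m, x ∈ S)
    (hdense : ¬ IsSparse f t k m) (e : ℤˣ × Fin d) :
    ∑ a ∈ cube k m, outerFace S f t k m a e ≤ ∑ a ∈ cube k m, crossing S f t a e +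
      2 ^ (d + 1) * ENNReal.ofReal (finVar (levelInd f t) (cube k m)) := by
  classical
  obtain ⟨c, hc⟩ := exists_forall_apply_eq_of_anc_nbr_ne k m e
  have hface : ∀ a ∈ cube k m, outerFace S f t k m a e ≤
      crossing S f t a e + if a e.2 = c ∧ ¬ t < f a then 1 else 0 := by
    intro a ha
    by_cases h : nbr e a ∈ S ∧ anc k (nbr e a) ≠ m ∧ ¬ t < f (nbr e a)
    · by_cases hfa : t < f a
      · simp [outerFace, crossing, h, hfa, hS a ha]
      · simp [outerFace, h, hfa, hc a ha h.2.1]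
    · rw [outerFace, if_neg h]; exact zero_le
  have hslab : ∑ a ∈ cube k m, (if a e.2 = c ∧ ¬ t < f a then (1 : ℝ≥0∞) else 0) ≤
      2 ^ (d + 1) * ENNReal.ofReal (finVar (levelInd f t) (cube k m)) := by
    have h := ENNReal.ofReal_le_ofReal (card_filter_slab_le_of_not_isSparse hdense e.2 c)
    rw [ENNReal.ofReal_natCast, ENNReal.ofReal_mul (by positivity), slab, ← cube,
      Finset.filter_filter] at h
    simpa [ENNReal.ofReal_pow] using h
  calc ∑ a ∈ cube k m, outerFace S f t k m a e
      ≤ ∑ a ∈ cube k m, (crossing S f t a e + if a e.2 = c ∧ ¬ t < f a then 1 else 0) :=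
        Finset.sum_le_sum hface
    _ ≤ _ := by rw [Finset.sum_add_distrib]; gcongr

variable {S f t k m} in
theorem sum_sum_outerFace_le_of_not_isSparse (hS : ∀ x ∈ cube k m, x ∈ S)
    (hdense : ¬ IsSparse f t k m) :
    ∑ a ∈ cube k m, ∑ e, outerFace S f t k m a e ≤ ∑ a ∈ cube k m, (∑ e, crossing S f t a e +
      2 * d * 2 ^ (d + 1) * varDensity S (levelInd f t) a) := by
  rw [Finset.sum_comm, Finset.sum_add_distrib, ← Finset.mul_sum]
  calc ∑ e, ∑ a ∈ cube k m, outerFace S f t k m a e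
      ≤ ∑ e, (∑ a ∈ cube k m, crossing S f t a e +
          2 ^ (d + 1) * ENNReal.ofReal (finVar (levelInd f t) (cube k m))) :=
        Finset.sum_le_sum fun e _ => sum_outerFace_le_of_not_isSparse hS hdense e
    _ = ∑ a ∈ cube k m, ∑ e, crossing S f t a e +
          2 * d * 2 ^ (d + 1) * ENNReal.ofReal (finVar (levelInd f t) (cube k m)) := by
        rw [Finset.sum_add_distrib, Finset.sum_const, Finset.card_univ, card_units_int_prod_fin,
          Finset.sum_comm, nsmul_eq_mul, ← mul_assoc]
        push_cast
        rfl
    _ ≤ _ := by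
        gcongr
        exact ofReal_finVar_le_sum_varDensity _ hS

theorem sum_sum_outerFace_le :
    ∑ a ∈ cube k m, ∑ e, outerFace S f t k m a e ≤ 2 * d * ((2 ^ k) ^ d / 2 ^ k) := by
  classical
  have hdir (e : ℤˣ × Fin d) : ∑ a ∈ cube k m, outerFace S f t k m a e ≤ (2 ^ k) ^ d / 2 ^ k := by
    obtain ⟨c, hc⟩ := exists_forall_apply_eq_of_anc_nbr_ne k m e
    calc ∑ a ∈ cube k m, outerFace S f t k m a e
        ≤ ∑ a ∈ cube k m, if a e.2 = c then (1 : ℝ≥0∞) else 0 := by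
          refine Finset.sum_le_sum fun a ha => ?_
          by_cases h : anc k (nbr e a) ≠ m
          · rw [if_pos (hc a ha h)]
            unfold outerFace
            split_ifs <;> simp
          · simp [outerFace, h]
      _ = (slab (fun i => 2 ^ k * m i) (2 ^ k) e.2 c).card := by
          rw [slab, Finset.sum_ite]; simp [cube]
      _ ≤ (2 ^ k) ^ d / 2 ^ k := by
          rw [ENNReal.le_div_iff_mul_le (by simp) (by simp)]
          exact_mod_cast card_slab_mul_le (fun i => 2 ^ k * m i) (2 ^ k) e.2 c
  rw [Finset.sum_comm]
  refine (Finset.sum_le_sum fun e _ => hdir e).trans_eq ?_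
  rw [Finset.sum_const, Finset.card_univ, card_units_int_prod_fin, nsmul_eq_mul]
  push_cast
  rfl

end BoundaryFaces

theorem gridVar_levelInd_max_le {A : ℕ → Set (Cell d)} {f g : Cell d → ℝ} (hA : IsAdmissible A)
    (hg : IsMaxFun A f g) (t : ℝ) :
    gridVar (A 0) (levelInd g t) ≤ (1 + 2 * d * 2 ^ (d + 1)) * gridVar (A 0) (levelInd f t) +
      2 * d * ∑' k, ∑' m,
        (sparseTopCubes A f t k).indicator (fun _ => (2 ^ k) ^ d / 2 ^ k) m := by
  set w : Cell d → ℝ≥0∞ := fun a => ∑ e, crossing (A 0) f t a e +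
    2 * d * 2 ^ (d + 1) * varDensity (A 0) (levelInd f t) a with hw
  have hwsum : ∑' a, w a = (1 + 2 * d * 2 ^ (d + 1)) * gridVar (A 0) (levelInd f t) := by
    rw [hw, ENNReal.tsum_add, ← gridVar_levelInd_eq, ENNReal.tsum_mul_left, ← gridVar]
    ring
  have hcube (k : ℕ) (m : Cell d) :
      (topCubes A f t k).indicator (fun m => ∑ a ∈ cube k m, ∑ e, outerFace (A 0) f t k m a e) m ≤
        (topCubes A f t k).indicator (fun m => ∑ a ∈ cube k m, w a) m +
        2 * d * (sparseTopCubes A f t k).indicator (fun _ => (2 ^ k) ^ d / 2 ^ k) m := by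
    by_cases hm : m ∈ topCubes A f t k
    · by_cases hsparse : IsSparse f t k m
      · simp only [Set.indicator_of_mem hm,
          Set.indicator_of_mem (show m ∈ sparseTopCubes A f t k from ⟨hm, hsparse⟩)]
        exact le_add_left (sum_sum_outerFace_le (A 0) f t k m)
      · simp only [Set.indicator_of_mem hm]
        exact le_add_right (sum_sum_outerFace_le_of_not_isSparse
          (fun x hx => hA.mem_zero hm.1 hx) hsparse)
    · simp [hm]
  calc gridVar (A 0) (levelInd g t) = ∑' a, ∑ e, crossing (A 0) g t a e :=
        gridVar_levelInd_eq _ _ _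
    _ ≤ ∑' a, ∑' k, (topCubes A f t k).indicator
          (fun m => ∑ e, outerFace (A 0) f t k m a e) (anc k a) :=
        ENNReal.tsum_le_tsum fun a => sum_crossing_le hA hg t a
    _ ≤ ∑' k, ∑' m, ((topCubes A f t k).indicator (fun m => ∑ a ∈ cube k m, w a) m +
          2 * d * (sparseTopCubes A f t k).indicator (fun _ => (2 ^ k) ^ d / 2 ^ k) m) := by
        rw [← tsum_indicator_sum_cube]
        exact ENNReal.tsum_le_tsum fun k => ENNReal.tsum_le_tsum fun m => hcube k m
    _ ≤ _ := by
        simp only [ENNReal.tsum_add, ENNReal.tsum_mul_left]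
        rw [← hwsum, tsum_indicator_sum_cube]
        gcongr with a
        exact tsum_indicator_topCubes_le _ a

/-! ### Charging the sparse maximal cubes -/

/-- The levels at which the cube `(k, m)` is a sparse maximal cube. -/
def lowSet (A : ℕ → Set (Cell d)) (f : Cell d → ℝ) (k : ℕ) (m : Cell d) : Set ℝ :=
  {t | m ∈ sparseTopCubes A f t k}

section LowSet

variable (A : ℕ → Set (Cell d)) (f : Cell d → ℝ) (k : ℕ) (m : Cell d)

theorem bddBelow_lowSet : BddBelow (lowSet A f k m) := by
  refine ⟨-∑ x ∈ cube k m, |f x|, fun t ht => ?_⟩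
  by_contra! hlt
  have hfull : supCard f t (cube k m) = (2 ^ k) ^ d := by
    rw [supCard, Finset.filter_true_of_mem, card_cube]
    intro x hx
    have := Finset.single_le_sum (f := fun x => |f x|) (fun _ _ => abs_nonneg _) hx
    linarith [neg_abs_le (f x)]
  have hsparse : 2 ^ (d + 1) * supCard f t (cube k m) < (2 ^ k) ^ d := ht.2
  rw [hfull] at hsparse
  exact absurd hsparse (not_lt.2 (Nat.le_mul_of_pos_left _ (by positivity)))

/-- The level `s` is chosen so low that `lowSet` lies in an interval of length at most twice the
excess over `s` of the average in the cube. -/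
theorem exists_lowSet_cover :
    ∃ (s : ℝ) (R : Finset (ℕ × Cell d)) (T : Set ℝ), MeasurableSet T ∧ lowSet A f k m ⊆ T ∧
      IsSubfamily k m R ∧ (R.Nonempty → s ∈ lowSet A f k m) ∧
      volume T * (2 ^ k) ^ d ≤ 2 * (3 * 2 ^ (d + 2)) * ∑ c ∈ R, charge f k s c := by
  rcases (lowSet A f k m).eq_empty_or_nonempty with h | h
  · exact ⟨0, ∅, ∅, MeasurableSet.empty, h.le, ⟨by simp, by simp⟩, by simp, by simp⟩
  have hbdd := bddBelow_lowSet A f k m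
  set σ := sInf (lowSet A f k m)
  have hσ : σ < avg f k m := by
    obtain ⟨t, ht⟩ := h
    exact (csInf_le hbdd ht).trans_lt ht.1.2.1
  obtain ⟨s, hs, hslt⟩ := exists_lt_of_csInf_lt h
    (show σ < σ + (avg f k m - σ) / 2 by linarith)
  obtain ⟨R, hR⟩ := exists_isCharging k m s hs.2
  refine ⟨s, R, Ico σ (avg f k m), measurableSet_Ico, fun t ht => ⟨csInf_le hbdd ht, ht.1.2.1⟩,
    hR.toIsSubfamily, fun _ => hs, ?_⟩
  calc volume (Ico σ (avg f k m)) * (2 ^ k) ^ d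
      ≤ ENNReal.ofReal (2 * (avg f k m - s)) * (2 ^ k) ^ d := by
        rw [Real.volume_Ico]; gcongr; linarith
    _ = 2 * (ENNReal.ofReal (avg f k m - s) * (2 ^ k) ^ d) := by
        rw [ENNReal.ofReal_mul (by norm_num), mul_assoc, ENNReal.ofReal_ofNat]
    _ ≤ 2 * (3 * 2 ^ (d + 2) * ∑ c ∈ R, charge f k s c) := mul_le_mul_right hR.le_sum 2
    _ = 2 * (3 * 2 ^ (d + 2)) * ∑ c ∈ R, charge f k s c := by ring

end LowSet

theorem tsum_three_quarters_pow : ∑' n : ℕ, (3 / 4 : ℝ≥0∞) ^ n = 4 := by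
  have hsub : (1 : ℝ≥0∞) - 3 / 4 = 4⁻¹ := by
    refine ENNReal.sub_eq_of_eq_add (ENNReal.div_ne_top (by simp) (by simp)) ?_
    rw [← one_div, ENNReal.div_add_div_same, show (1 + 3 : ℝ≥0∞) = 4 by norm_num,
      ENNReal.div_self (by simp) (by simp)]
  rw [ENNReal.tsum_geometric, hsub, inv_inv]

theorem three_halves_pow_mul_two_pow_div {r k : ℕ} (h : r ≤ k) :
    (3 / 2 : ℝ≥0∞) ^ (k - r) * 2 ^ r / 2 ^ k = (3 / 4) ^ (k - r) := by
  obtain ⟨j, rfl⟩ := Nat.exists_eq_add_of_le h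
  have hbase : (3 / 2 : ℝ≥0∞) = 3 / 4 * 2 := by
    refine ((ENNReal.eq_div_iff (by simp) (by simp)).2 ?_).symm
    rw [mul_comm, mul_assoc, show (2 * 2 : ℝ≥0∞) = 4 by norm_num,
      ENNReal.div_mul_cancel (by simp) (by simp)]
  rw [Nat.add_sub_cancel_left]
  refine ((ENNReal.eq_div_iff (by simp) (by simp)).2 ?_).symm
  rw [hbase, mul_pow, pow_add]
  ring

/-- The subcube `c` contains the cell `x`, belongs to the family `R` of the cube of generation `k`
around `x`, and is charged at the level `l`. -/
def IsCharged (f : Cell d → ℝ) (s : ℕ → Cell d → ℝ) (R : ℕ → Cell d → Finset (ℕ × Cell d))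
    (x : Cell d) (l : ℝ) (k : ℕ) (c : ℕ × Cell d) : Prop :=
  anc c.1 x = c.2 ∧ c ∈ R k (anc k x) ∧ l ∈ Ico (s k (anc k x)) (avg f c.1 c.2)

open Classical in
/-- The weight with which the cell `x` is charged at the level `l` by the cube of generation `k`
around `x`. -/
def chainWeight (f : Cell d → ℝ) (s : ℕ → Cell d → ℝ) (R : ℕ → Cell d → Finset (ℕ × Cell d))
    (x : Cell d) (l : ℝ) (k : ℕ) : ℝ≥0∞ :=
  ∑ c ∈ R k (anc k x), if IsCharged f s R x l k c then (3 / 4) ^ (k - c.1) else 0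

section ChainWeight

variable {A : ℕ → Set (Cell d)} {f : Cell d → ℝ} {s : ℕ → Cell d → ℝ}
  {R : ℕ → Cell d → Finset (ℕ × Cell d)} {x m : Cell d} {l : ℝ} {k k₀ : ℕ} {c c₀ : ℕ × Cell d}

theorem measurable_chainWeight (f : Cell d → ℝ) (s : ℕ → Cell d → ℝ)
    (R : ℕ → Cell d → Finset (ℕ × Cell d)) (x : Cell d) (k : ℕ) :
    Measurable fun l => chainWeight f s R x l k := by
  classical
  refine Finset.measurable_sum _ fun c _ => Measurable.ite ?_ measurable_const measurable_const
  exact (MeasurableSet.const _).inter ((MeasurableSet.const _).inter measurableSet_Ico)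

theorem chainWeight_eq_zero (h : ∀ c, ¬ IsCharged f s R x l k c) : chainWeight f s R x l k = 0 :=
  Finset.sum_eq_zero fun c _ => if_neg (h c)

theorem chainWeight_eq_pow (hR : ∀ k m, IsSubfamily k m (R k m)) (h : IsCharged f s R x l k c) :
    chainWeight f s R x l k = (3 / 4) ^ (k - c.1) := by
  rw [chainWeight, Finset.sum_eq_single_of_mem c h.2.1, if_pos h]
  exact fun c' hc' hne => if_neg fun h' => hne ((hR _ _).disj x c' hc' c h.2.1 h'.1 h.1)

/-- By maximality, no cube of the chain above `x` exceeds the level `l` beyond generation `k₀`. -/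
theorem fst_le_of_isCharged (hA : IsAdmissible A) (hR : ∀ k m, IsSubfamily k m (R k m))
    (hs : ∀ k m, (R k m).Nonempty → s k m ∈ lowSet A f k m)
    (h : IsCharged f s R x l k c) (h₀ : IsCharged f s R x l k₀ c₀) : c.1 ≤ k₀ := by
  by_contra! hlt
  have hck := ((hR _ _).sub c h.2.1).1
  have hmem : anc c.1 x ∈ A c.1 := hA.mem_of_anc_mem (j := k - c.1) <| by
    rw [anc_anc, Nat.add_sub_cancel' hck]
    exact (hs _ _ ⟨c, h.2.1⟩).1.1
  have havg := avg_le_of_mem_topCubes (hs _ _ ⟨c₀, h₀.2.1⟩).1 hlt hmem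
  rw [h.1] at havg
  exact absurd h.2.2.2 (not_lt.2 (havg.trans h₀.2.2.1))

theorem chainWeight_add_le (hA : IsAdmissible A) (hR : ∀ k m, IsSubfamily k m (R k m))
    (hs : ∀ k m, (R k m).Nonempty → s k m ∈ lowSet A f k m)
    (h₀ : IsCharged f s R x l k₀ c₀) (n : ℕ) :
    chainWeight f s R x l (n + k₀) ≤ (3 / 4) ^ n := by
  by_cases h : ∃ c, IsCharged f s R x l (n + k₀) c
  · obtain ⟨c, hc⟩ := h
    have hck := fst_le_of_isCharged hA hR hs hc h₀
    rw [chainWeight_eq_pow hR hc]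
    refine pow_le_pow_right_of_le_one' ?_ (by omega)
    rw [ENNReal.div_le_iff (by simp) (by simp)]
    norm_num
  · rw [chainWeight_eq_zero (not_exists.1 h)]
    exact zero_le

theorem tsum_chainWeight_le (hA : IsAdmissible A) (hR : ∀ k m, IsSubfamily k m (R k m))
    (hs : ∀ k m, (R k m).Nonempty → s k m ∈ lowSet A f k m) (x : Cell d) (l : ℝ) :
    ∑' k, chainWeight f s R x l k ≤ 4 := by
  classical
  by_cases hne : ∃ k c, IsCharged f s R x l k c
  · obtain ⟨c₀, hc₀⟩ := Nat.find_spec hne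
    have hbelow : ∑ k ∈ Finset.range (Nat.find hne), chainWeight f s R x l k = 0 :=
      Finset.sum_eq_zero fun k hk =>
        chainWeight_eq_zero (not_exists.1 (Nat.find_min hne (Finset.mem_range.1 hk)))
    rw [← ENNReal.summable.sum_add_tsum_nat_add' (k := Nat.find hne), hbelow, zero_add,
      ← tsum_three_quarters_pow]
    exact ENNReal.tsum_le_tsum fun n => chainWeight_add_le hA hR hs hc₀ n
  · push Not at hne
    simp [chainWeight_eq_zero (hne _)]

theorem charge_div_two_pow_le {S : Set (Cell d)} {r : ℝ} (hS : ∀ x ∈ cube c.1 c.2, x ∈ S)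
    (hck : c.1 ≤ k) :
    charge f k r c / 2 ^ k ≤ ∫⁻ l, (Ico r (avg f c.1 c.2)).indicator
      (fun l => (3 / 4) ^ (k - c.1) * ∑ x ∈ cube c.1 c.2, varDensity S (levelInd f l) x) l := by
  rw [lintegral_indicator measurableSet_Ico]
  calc charge f k r c / 2 ^ k
      = (3 / 2) ^ (k - c.1) * 2 ^ c.1 / 2 ^ k *
          ∫⁻ l in Ico r (avg f c.1 c.2), ENNReal.ofReal (finVar (levelInd f l) (cube c.1 c.2)) := by
        rw [charge, ← mul_assoc, ENNReal.mul_div_right_comm]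
    _ = ∫⁻ l in Ico r (avg f c.1 c.2),
          (3 / 4) ^ (k - c.1) * ENNReal.ofReal (finVar (levelInd f l) (cube c.1 c.2)) := by
        rw [three_halves_pow_mul_two_pow_div hck,
          lintegral_const_mul _ (measurable_finVar_levelInd f _).ennreal_ofReal]
    _ ≤ _ := lintegral_mono fun l =>
        mul_le_mul_right (ofReal_finVar_le_sum_varDensity _ hS) _

theorem sum_chainWeight_mul (hR : IsSubfamily k m (R k m)) (D : Cell d → ℝ≥0∞) (l : ℝ) :
    ∑ x ∈ cube k m, chainWeight f s R x l k * D x = ∑ c ∈ R k m,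
      (Ico (s k m) (avg f c.1 c.2)).indicator
        (fun _ => (3 / 4) ^ (k - c.1) * ∑ x ∈ cube c.1 c.2, D x) l := by
  classical
  have hcell (x : Cell d) (hx : x ∈ cube k m) : chainWeight f s R x l k * D x =
      ∑ c ∈ R k m, if anc c.1 x = c.2 then
        (Ico (s k m) (avg f c.1 c.2)).indicator (fun _ => (3 / 4) ^ (k - c.1) * D x) l else 0 := by
    rw [chainWeight, mem_cube.1 hx, Finset.sum_mul]
    refine Finset.sum_congr rfl fun c hc => ?_
    simp only [IsCharged, mem_cube.1 hx, hc, true_and, Set.indicator_apply, ite_and]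
    split_ifs <;> simp
  rw [Finset.sum_congr rfl hcell, Finset.sum_comm]
  refine Finset.sum_congr rfl fun c hc => ?_
  have hfilter : {x ∈ cube k m | anc c.1 x = c.2} = cube c.1 c.2 := by
    obtain ⟨hck, hanc⟩ := hR.sub c hc
    ext x
    rw [Finset.mem_filter, mem_cube, mem_cube]
    refine and_iff_right_of_imp fun h => ?_
    rw [← hanc, ← h, anc_anc, Nat.add_sub_cancel' hck]
  rw [← Finset.sum_filter, hfilter]
  by_cases hl : l ∈ Ico (s k m) (avg f c.1 c.2)
  · simp [hl, Finset.mul_sum]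
  · simp [hl]

theorem sum_charge_div_two_pow_le (hA : IsAdmissible A) (hR : IsSubfamily k m (R k m))
    (hs : (R k m).Nonempty → s k m ∈ lowSet A f k m) :
    ∑ c ∈ R k m, charge f k (s k m) c / 2 ^ k ≤
      ∫⁻ l, ∑ x ∈ cube k m, chainWeight f s R x l k * varDensity (A 0) (levelInd f l) x := by
  simp only [sum_chainWeight_mul hR]
  rw [lintegral_finsetSum]
  · refine Finset.sum_le_sum fun c hc => charge_div_two_pow_le (fun x hx => ?_) (hR.sub c hc).1
    have hxk : x ∈ cube k m := by
      rw [← Nat.add_sub_cancel' (hR.sub c hc).1]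
      exact cube_subset_cube (hR.sub c hc).2 hx
    exact hA.mem_zero (hs ⟨c, hc⟩).1.1 hxk
  · intro c _
    exact ((Finset.measurable_sum _ fun x _ =>
      measurable_varDensity_levelInd (A 0) f x).const_mul _).indicator measurableSet_Ico

theorem tsum_sum_charge_le (hA : IsAdmissible A) (hR : ∀ k m, IsSubfamily k m (R k m))
    (hs : ∀ k m, (R k m).Nonempty → s k m ∈ lowSet A f k m) :
    ∑' k, ∑' m, ∑ c ∈ R k m, charge f k (s k m) c / 2 ^ k ≤ 4 * gridVar (A 0) f := by
  set F : ℕ → Cell d → ℝ → ℝ≥0∞ := fun k x l =>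
    chainWeight f s R x l k * varDensity (A 0) (levelInd f l) x
  have hF (k : ℕ) (m : Cell d) : Measurable fun l => ∑ x ∈ cube k m, F k x l :=
    Finset.measurable_sum _ fun x _ =>
      (measurable_chainWeight f s R x k).mul (measurable_varDensity_levelInd (A 0) f x)
  calc ∑' k, ∑' m, ∑ c ∈ R k m, charge f k (s k m) c / 2 ^ k
      ≤ ∑' k, ∑' m, ∫⁻ l, ∑ x ∈ cube k m, F k x l :=
        ENNReal.tsum_le_tsum fun k => ENNReal.tsum_le_tsum fun m =>
          sum_charge_div_two_pow_le hA (hR k m) (hs k m)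
    _ = ∫⁻ l, ∑' k, ∑' m, ∑ x ∈ cube k m, F k x l := by
        rw [lintegral_tsum fun k => (Measurable.tsum (hF k)).aemeasurable]
        simp only [lintegral_tsum fun m => (hF _ m).aemeasurable]
    _ = ∫⁻ l, ∑' x, (∑' k, chainWeight f s R x l k) * varDensity (A 0) (levelInd f l) x := by
        refine lintegral_congr fun l => ?_
        simp only [tsum_sum_cube fun _ x => F _ x l]
        rw [ENNReal.tsum_comm]
        exact tsum_congr fun x => ENNReal.tsum_mul_right
    _ ≤ ∫⁻ l, 4 * gridVar (A 0) (levelInd f l) := by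
        refine lintegral_mono fun l => ?_
        rw [gridVar, ← ENNReal.tsum_mul_left]
        gcongr with x
        exact tsum_chainWeight_le hA hR hs x l
    _ = 4 * gridVar (A 0) f := by
        rw [lintegral_const_mul _ (measurable_gridVar_levelInd _ _), lintegral_gridVar_levelInd]

end ChainWeight

/-! ### The discrete variation bound -/

/-- The constant in the discrete variation bound. -/
def gridConst (d : ℕ) : ℝ≥0∞ :=
  (1 + 2 * d * 2 ^ (d + 1)) + 2 * d * (2 * (3 * 2 ^ (d + 2)) * 4)

theorem gridConst_ne_top (d : ℕ) : gridConst d ≠ ∞ := by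
  unfold gridConst
  finiteness

section GridVarMax

variable {A : ℕ → Set (Cell d)} {f g : Cell d → ℝ}

theorem lintegral_tsum_sparseTopCubes_le (hA : IsAdmissible A) (f : Cell d → ℝ) :
    ∫⁻ t, ∑' k, ∑' m, (sparseTopCubes A f t k).indicator (fun _ => (2 ^ k) ^ d / 2 ^ k) m ≤
      2 * (3 * 2 ^ (d + 2)) * (4 * gridVar (A 0) f) := by
  choose s R T hT hlow hR hs hvol using exists_lowSet_cover A f
  have hmeas (k : ℕ) (m : Cell d) :
      Measurable ((T k m).indicator fun _ : ℝ => ((2 ^ k) ^ d / 2 ^ k : ℝ≥0∞)) :=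
    measurable_const.indicator (hT k m)
  calc ∫⁻ t, ∑' k, ∑' m, (sparseTopCubes A f t k).indicator (fun _ => (2 ^ k) ^ d / 2 ^ k) m
      ≤ ∫⁻ t, ∑' k, ∑' m, (T k m).indicator (fun _ => (2 ^ k) ^ d / 2 ^ k) t := by
        refine lintegral_mono fun t => ENNReal.tsum_le_tsum fun k =>
          ENNReal.tsum_le_tsum fun m => ?_
        refine Set.indicator_apply_le' (fun hm => ?_) fun _ => zero_le
        rw [Set.indicator_of_mem (hlow k m hm)]
    _ = ∑' k, ∑' m, volume (T k m) * (2 ^ k) ^ d / 2 ^ k := by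
        rw [lintegral_tsum fun k => (Measurable.tsum (hmeas k)).aemeasurable]
        simp only [lintegral_tsum fun m => (hmeas _ m).aemeasurable,
          lintegral_indicator_const (hT _ _), ENNReal.mul_comm_div, mul_comm, mul_div_assoc]
    _ ≤ ∑' k, ∑' m, 2 * (3 * 2 ^ (d + 2)) * ∑ c ∈ R k m, charge f k (s k m) c / 2 ^ k := by
        refine ENNReal.tsum_le_tsum fun k => ENNReal.tsum_le_tsum fun m => ?_
        simp only [div_eq_mul_inv, ← Finset.sum_mul, ← mul_assoc] at hvol ⊢
        exact mul_le_mul_left (hvol k m) _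
    _ ≤ 2 * (3 * 2 ^ (d + 2)) * (4 * gridVar (A 0) f) := by
        simp only [ENNReal.tsum_mul_left]
        gcongr
        exact tsum_sum_charge_le hA hR hs

theorem gridVar_max_le (hA : IsAdmissible A) (hg : IsMaxFun A f g) :
    gridVar (A 0) g ≤ gridConst d * gridVar (A 0) f := by
  calc gridVar (A 0) g = ∫⁻ t, gridVar (A 0) (levelInd g t) :=
        (lintegral_gridVar_levelInd _ _).symm
    _ ≤ ∫⁻ t, ((1 + 2 * d * 2 ^ (d + 1)) * gridVar (A 0) (levelInd f t) + 2 * d * ∑' k, ∑' m,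
          (sparseTopCubes A f t k).indicator (fun _ => (2 ^ k) ^ d / 2 ^ k) m) :=
        lintegral_mono fun t => gridVar_levelInd_max_le hA hg t
    _ = (1 + 2 * d * 2 ^ (d + 1)) * gridVar (A 0) f + 2 * d * ∫⁻ t, ∑' k, ∑' m,
          (sparseTopCubes A f t k).indicator (fun _ => (2 ^ k) ^ d / 2 ^ k) m := by
        have hmeas := measurable_gridVar_levelInd (A 0) f
        rw [lintegral_add_left (hmeas.const_mul _), lintegral_const_mul _ hmeas,
          lintegral_gridVar_levelInd, lintegral_const_mul' _ _ (by finiteness)]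
    _ ≤ (1 + 2 * d * 2 ^ (d + 1)) * gridVar (A 0) f +
          2 * d * (2 * (3 * 2 ^ (d + 2)) * (4 * gridVar (A 0) f)) := by
        gcongr
        exact lintegral_tsum_sparseTopCubes_le hA f
    _ = gridConst d * gridVar (A 0) f := by unfold gridConst; ring

end GridVarMax

/-! ### Dyadic cubes -/

/-- The dyadic cube of scale `2^s` and index `m`. -/
def dcube (s : ℤ) (m : Cell d) : Set (Ed d) :=
  {x : Ed d | ∀ i, x i ∈ Set.Ico ((2 : ℝ) ^ s * m i) ((2 : ℝ) ^ s * (m i + 1))}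

/-- The interior of the dyadic cube of scale `2^s` and index `m`. -/
def odcube (s : ℤ) (m : Cell d) : Set (Ed d) :=
  {x : Ed d | ∀ i, x i ∈ Set.Ioo ((2 : ℝ) ^ s * m i) ((2 : ℝ) ^ s * (m i + 1))}

/-- The index of the dyadic cube of scale `2^s` containing `x`. -/
def idx (s : ℤ) (x : Ed d) : Cell d := fun i => ⌊x i / (2 : ℝ) ^ s⌋

section DyadicCube

variable {s : ℤ} {k : ℕ} {m p : Cell d} {j : Fin d} {x : Ed d}

theorem mem_dcube : x ∈ dcube s m ↔ idx s x = m := by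
  rw [funext_iff]
  refine forall_congr' fun i => ?_
  have hpos : (0 : ℝ) < 2 ^ s := by positivity
  rw [idx, Int.floor_eq_iff, le_div_iff₀ hpos, div_lt_iff₀ hpos, mem_Ico, mul_comm,
    mul_comm (2 ^ s : ℝ)]

theorem odcube_subset_dcube (s : ℤ) (m : Cell d) : odcube s m ⊆ dcube s m :=
  fun _ hx i => Ioo_subset_Ico_self (hx i)

theorem anc_idx (s : ℤ) (k : ℕ) (x : Ed d) : anc k (idx s x) = idx (s + k) x := by
  ext i
  have hfloor := Int.floor_div_natCast (x i / (2 : ℝ) ^ s) (2 ^ k)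
  push_cast at hfloor
  simpa only [anc, idx, zpow_add₀ (two_ne_zero' ℝ), ← div_div, zpow_natCast] using hfloor.symm

theorem mem_dcube_add : x ∈ dcube (s + k) m ↔ idx s x ∈ cube k m := by
  rw [mem_cube, anc_idx, mem_dcube]

theorem dcube_add_eq_iUnion (s : ℤ) (k : ℕ) (m : Cell d) :
    dcube (s + k) m = ⋃ p ∈ cube k m, dcube s p := by
  ext x
  rw [mem_dcube_add]
  simp [mem_dcube]

theorem dcube_subset_dcube (h : anc k p = m) : dcube s p ⊆ dcube (s + k) m := fun x hx => by
  rw [mem_dcube] at hx ⊢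
  rw [← anc_idx, hx, h]

theorem disjoint_dcube (h : m ≠ p) : Disjoint (dcube s m) (dcube s p) :=
  Set.disjoint_left.2 fun _ hm hp => h ((mem_dcube.1 hm).symm.trans (mem_dcube.1 hp))

theorem dcube_eq_preimage (s : ℤ) (m : Cell d) :
    dcube s m = WithLp.ofLp ⁻¹'
      (Set.univ.pi fun i => Set.Ico ((2 : ℝ) ^ s * m i) ((2 : ℝ) ^ s * (m i + 1))) := by
  ext x; simp [dcube]

theorem odcube_eq_preimage (s : ℤ) (m : Cell d) :
    odcube s m = WithLp.ofLp ⁻¹'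
      (Set.univ.pi fun i => Set.Ioo ((2 : ℝ) ^ s * m i) ((2 : ℝ) ^ s * (m i + 1))) := by
  ext x; simp [odcube]

theorem isOpen_odcube (s : ℤ) (m : Cell d) : IsOpen (odcube s m) := by
  rw [odcube_eq_preimage]
  exact (isOpen_set_pi Set.finite_univ fun _ _ => isOpen_Ioo).preimage (PiLp.continuous_ofLp 2 _)

theorem measurableSet_dcube (s : ℤ) (m : Cell d) : MeasurableSet (dcube s m) := by
  rw [dcube_eq_preimage]
  exact (MeasurableSet.univ_pi fun _ => measurableSet_Ico).preimage
    (PiLp.volume_preserving_ofLp (Fin d)).measurable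

theorem odcube_ae_eq_dcube (s : ℤ) (m : Cell d) : odcube s m =ᵐ[volume] dcube s m := by
  rw [dcube_eq_preimage, odcube_eq_preimage]
  exact (PiLp.volume_preserving_ofLp (Fin d)).quasiMeasurePreserving.preimage_ae_eq
    (Measure.univ_pi_Ioo_ae_eq_Icc.trans Measure.univ_pi_Ico_ae_eq_Icc.symm)

theorem volume_dcube (s : ℤ) (m : Cell d) :
    volume (dcube s m) = ENNReal.ofReal (((2 : ℝ) ^ s) ^ d) := by
  rw [dcube_eq_preimage, (PiLp.volume_preserving_ofLp (Fin d)).measure_preimage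
    (MeasurableSet.univ_pi fun _ => measurableSet_Ico).nullMeasurableSet, Real.volume_pi_Ico]
  have hside : ∀ i, (2 : ℝ) ^ s * (m i + 1) - (2 : ℝ) ^ s * m i = 2 ^ s := fun i => by ring
  simp [hside, ENNReal.ofReal_pow (show (0 : ℝ) ≤ 2 ^ s by positivity)]

theorem volume_real_dcube (s : ℤ) (m : Cell d) :
    volume.real (dcube s m) = ((2 : ℝ) ^ s) ^ d := by
  rw [Measure.real, volume_dcube, ENNReal.toReal_ofReal (by positivity)]

theorem isBounded_dcube (s : ℤ) (m : Cell d) : Bornology.IsBounded (dcube s m) := by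
  rw [dcube_eq_preimage]
  exact (PiLp.antilipschitzWith_ofLp 2 _).isBounded_preimage
    (Bornology.IsBounded.pi fun i => Metric.isBounded_Ico _ _)

theorem isCompact_closure_dcube (s : ℤ) (m : Cell d) : IsCompact (closure (dcube s m)) :=
  (isBounded_dcube s m).isCompact_closure

theorem idx_add_single (s : ℤ) (j : Fin d) (x : Ed d) :
    idx s (x + EuclideanSpace.single j ((2 : ℝ) ^ s)) = nbr (1, j) (idx s x) := by
  ext i
  have hne : (2 : ℝ) ^ s ≠ 0 := by positivity
  by_cases hi : i = j
  · subst hi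
    simp [idx, nbr, add_div, div_self hne]
  · simp [idx, nbr, hi]

theorem sub_single_mem_odcube :
    x - EuclideanSpace.single j ((2 : ℝ) ^ s) ∈ odcube s m ↔ x ∈ odcube s (nbr (1, j) m) := by
  refine forall_congr' fun i => ?_
  by_cases hi : i = j
  · subst hi
    simp [nbr, sub_lt_iff_lt_add, mul_add, lt_sub_iff_add_lt]
  · simp [hi, nbr]

theorem add_single_mem_dcube_union {t : ℝ} (ht : t ∈ Icc 0 ((2 : ℝ) ^ s)) (hx : x ∈ dcube s m) :
    x + EuclideanSpace.single j t ∈ dcube s m ∪ dcube s (nbr (1, j) m) := by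
  have hj := hx j
  rcases lt_or_ge (x j + t) ((2 : ℝ) ^ s * (m j + 1)) with hlt | hge
  · refine Or.inl fun i => ?_
    by_cases hi : i = j
    · subst hi
      simpa using ⟨by linarith [hj.1, ht.1], hlt⟩
    · simpa [hi] using hx i
  · refine Or.inr fun i => ?_
    by_cases hi : i = j
    · subst hi
      simpa [nbr] using ⟨hge, by linarith [hj.2, ht.2]⟩
    · simpa [hi, nbr] using hx i

theorem add_single_mem_closure_union {t : ℝ} (ht : t ∈ Icc 0 ((2 : ℝ) ^ s))
    (hx : x ∈ closure (dcube s m)) :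
    x + EuclideanSpace.single j t ∈ closure (dcube s m) ∪ closure (dcube s (nbr (1, j) m)) := by
  rw [← closure_union]
  exact map_mem_closure (f := fun y : Ed d => y + EuclideanSpace.single j t) (by fun_prop) hx
    fun y hy => add_single_mem_dcube_union ht hy

end DyadicCube

/-! ### Averages over adjacent dyadic cubes -/

theorem divergence_smul_single {ψ : Ed d → ℝ} (hψ : Differentiable ℝ ψ) (j : Fin d) (x : Ed d) :
    divergence (fun y => ψ y • EuclideanSpace.single j (1 : ℝ)) x
      = fderiv ℝ ψ x (EuclideanSpace.single j 1) := by
  unfold divergence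
  rw [fderiv_smul_const (hψ x)]
  simp

section Variation

variable {Ω : Set (Ed d)} {f ψ : Ed d → ℝ}

theorem ofReal_integral_mul_fderiv_le_var (hψ : ContDiff ℝ 1 ψ) (hc : HasCompactSupport ψ)
    (hs : tsupport ψ ⊆ Ω) (h1 : ∀ x, |ψ x| ≤ 1) (j : Fin d) :
    ENNReal.ofReal (∫ x in Ω, f x * fderiv ℝ ψ x (EuclideanSpace.single j 1)) ≤ var Ω f := by
  simp only [← divergence_smul_single (hψ.differentiable one_ne_zero)]
  refine le_iSup₂_of_le (fun y => ψ y • EuclideanSpace.single j (1 : ℝ)) ⟨?_, ?_, ?_, ?_⟩ le_rfl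
  · exact hψ.smul contDiff_const
  · exact hc.smul_right
  · exact (closure_mono (Function.support_smul_subset_left ψ _)).trans hs
  · intro x
    simpa [norm_smul] using h1 x

theorem abs_integral_mul_fderiv_le_var (hvar : var Ω f < ∞) (hψ : ContDiff ℝ 1 ψ)
    (hc : HasCompactSupport ψ) (hs : tsupport ψ ⊆ Ω) (h1 : ∀ x, |ψ x| ≤ 1) (j : Fin d) :
    |∫ x in Ω, f x * fderiv ℝ ψ x (EuclideanSpace.single j 1)| ≤ (var Ω f).toReal := by
  have hpos := ofReal_integral_mul_fderiv_le_var (f := f) hψ hc hs h1 j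
  have hneg := ofReal_integral_mul_fderiv_le_var (f := f) (ψ := -ψ) hψ.neg hc.neg
    ((tsupport_neg ψ).trans_subset hs) (by simpa using h1) j
  simp only [fderiv_neg, neg_apply, mul_neg, integral_neg] at hneg
  exact abs_le'.2 ⟨(ENNReal.ofReal_le_iff_le_toReal hvar.ne).1 hpos,
    (ENNReal.ofReal_le_iff_le_toReal hvar.ne).1 hneg⟩

end Variation

theorem hasDerivAt_integral_mul_comp_sub_smul {E : Type*} [NormedAddCommGroup E]
    [NormedSpace ℝ E] [MeasurableSpace E] [OpensMeasurableSpace E] {μ : Measure E} {f η : E → ℝ}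
    (hf : Integrable f μ) (hη : ContDiff ℝ 1 η) (hc : HasCompactSupport η) (e : E) (t : ℝ) :
    HasDerivAt (fun t : ℝ => ∫ x, f x * η (x - t • e) ∂μ)
      (-∫ x, f x * fderiv ℝ η (x - t • e) e ∂μ) t := by
  have hη' : Continuous fun x => fderiv ℝ η x e :=
    (hη.continuous_fderiv one_ne_zero).clm_apply continuous_const
  obtain ⟨C₀, hC₀⟩ := hc.exists_bound_of_continuous hη.continuous
  obtain ⟨C, hC⟩ := (hc.fderiv_apply ℝ e).exists_bound_of_continuous hη'
  have hmeas : ∀ {g : E → ℝ}, Continuous g → ∀ u : ℝ,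
      AEStronglyMeasurable (fun x => f x * g (x - u • e)) μ := fun hg u =>
    hf.aestronglyMeasurable.mul (hg.comp (by fun_prop)).aestronglyMeasurable
  simp only [← integral_neg, ← mul_neg]
  refine (hasDerivAt_integral_of_dominated_loc_of_deriv_le
    (F' := fun t x => f x * -fderiv ℝ η (x - t • e) e) (bound := fun x => ‖f x‖ * C)
    univ_mem (Eventually.of_forall (hmeas hη.continuous)) ?_
    (hmeas (g := fun x => -fderiv ℝ η x e) hη'.neg t) ?_
    (hf.norm.mul_const C) ?_).2
  · exact hf.mul_bdd (hη.continuous.comp (by fun_prop)).aestronglyMeasurable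
      (Eventually.of_forall fun x => hC₀ _)
  · refine Eventually.of_forall fun x u _ => ?_
    rw [norm_mul, norm_neg]
    exact mul_le_mul_of_nonneg_left (hC _) (norm_nonneg _)
  · refine Eventually.of_forall fun x u _ => HasDerivAt.const_mul (f x) ?_
    have hline : HasDerivAt (fun u : ℝ => x - u • e) (-e) u := by
      simpa using ((hasDerivAt_id u).smul_const e).const_sub x
    have hcomp := (hη.differentiable one_ne_zero (x - u • e)).hasFDerivAt.comp_hasDerivAt u hline
    rw [map_neg] at hcomp
    exact hcomp

section Translation

variable {Ω S : Set (Ed d)} {f : Ed d → ℝ}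

theorem abs_setIntegral_mul_fderiv_sub_le_var (hΩ : IsOpen Ω) (hvar : var Ω f < ∞)
    (hS : IsCompact S) (hSΩ : S ⊆ Ω) {η : Ed d → ℝ} (hη : ContDiff ℝ 1 η) (h1 : ∀ x, |η x| ≤ 1)
    (j : Fin d) (v : Ed d) (hmove : ∀ y ∈ tsupport η, y + v ∈ S) :
    |∫ x in S, f x * fderiv ℝ η (x - v) (EuclideanSpace.single j 1)| ≤ (var Ω f).toReal := by
  have hsupp : tsupport (fun x => η (x - v)) ⊆ S := fun x hx => by
    simpa using hmove _ (tsupport_comp_subset_preimage η (f := fun x => x - v) (by fun_prop) hx)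
  have hle := abs_integral_mul_fderiv_le_var hvar (ψ := fun x => η (x - v))
    (hη.comp (contDiff_id.sub contDiff_const))
    (hS.of_isClosed_subset (isClosed_tsupport _) hsupp) (hsupp.trans hSΩ) (fun x => h1 _) j
  rw [setIntegral_eq_of_subset_of_forall_sdiff_eq_zero hΩ.measurableSet hSΩ fun x hx => ?_] at hle
  · simpa only [fderiv_comp_sub] using hle
  · have hx0 := mt (fun h => hsupp (tsupport_fderiv_apply_subset ℝ (EuclideanSpace.single j 1) h))
      hx.2
    rw [image_eq_zero_of_notMem_tsupport hx0, mul_zero]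

theorem abs_setIntegral_translate_sub_le (hΩ : IsOpen Ω) (hf : LocallyIntegrableOn f Ω)
    (hvar : var Ω f < ∞) (hS : IsCompact S) (hSΩ : S ⊆ Ω) {η : Ed d → ℝ} (hη : ContDiff ℝ 1 η)
    (hc : HasCompactSupport η) (h1 : ∀ x, |η x| ≤ 1) {j : Fin d} {h : ℝ} (hh : 0 ≤ h)
    (hmove : ∀ y ∈ tsupport η, ∀ t ∈ Icc 0 h, y + EuclideanSpace.single j t ∈ S) :
    |(∫ x in S, f x * η (x - EuclideanSpace.single j h)) - ∫ x in S, f x * η x|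
      ≤ h * (var Ω f).toReal := by
  have hfS : IntegrableOn f S := hf.integrableOn_compact_subset hSΩ hS
  have hsingle : ∀ t : ℝ, EuclideanSpace.single j t = t • EuclideanSpace.single j (1 : ℝ) :=
    fun t => by ext i; by_cases hi : i = j <;> simp [hi]
  have hbound : ∀ t ∈ Icc 0 h,
      ‖-∫ x in S, f x * fderiv ℝ η (x - t • EuclideanSpace.single j 1)
        (EuclideanSpace.single j 1)‖ ≤ (var Ω f).toReal := fun t ht => by
    rw [norm_neg, Real.norm_eq_abs, ← hsingle]
    exact abs_setIntegral_mul_fderiv_sub_le_var hΩ hvar hS hSΩ hη h1 j _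
      fun y hy => hmove y hy t ht
  have hmvt := (convex_Icc (0 : ℝ) h).norm_image_sub_le_of_norm_hasDerivWithin_le
    (fun t _ => (hasDerivAt_integral_mul_comp_sub_smul hfS hη hc _ t).hasDerivWithinAt) hbound
    (left_mem_Icc.2 hh) (right_mem_Icc.2 hh)
  simpa [hsingle h, abs_of_nonneg hh, mul_comm h] using hmvt

theorem abs_setIntegral_translate_sub_le_of_tendsto (hΩ : IsOpen Ω)
    (hf : LocallyIntegrableOn f Ω) (hvar : var Ω f < ∞) (hS : IsCompact S) (hSΩ : S ⊆ Ω)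
    {η : ℕ → Ed d → ℝ} {θ : Ed d → ℝ} (hη : ∀ n, ContDiff ℝ 1 (η n))
    (hc : ∀ n, HasCompactSupport (η n)) (h1 : ∀ n x, |η n x| ≤ 1)
    (hlim : ∀ x, Tendsto (fun n => η n x) atTop (𝓝 (θ x))) {j : Fin d} {h : ℝ} (hh : 0 ≤ h)
    (hmove : ∀ n, ∀ y ∈ tsupport (η n), ∀ t ∈ Icc 0 h, y + EuclideanSpace.single j t ∈ S) :
    |(∫ x in S, f x * θ (x - EuclideanSpace.single j h)) - ∫ x in S, f x * θ x|
      ≤ h * (var Ω f).toReal := by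
  have hfS : IntegrableOn f S := hf.integrableOn_compact_subset hSΩ hS
  have htend : ∀ v : Ed d, Tendsto (fun n => ∫ x in S, f x * η n (x - v)) atTop
      (𝓝 (∫ x in S, f x * θ (x - v))) := by
    intro v
    refine tendsto_integral_of_dominated_convergence (fun x => ‖f x‖) ?_ hfS.norm ?_ ?_
    · exact fun n => hfS.aestronglyMeasurable.mul
        ((hη n).continuous.comp (by fun_prop)).aestronglyMeasurable
    · refine fun n => Eventually.of_forall fun x => ?_
      rw [norm_mul]
      exact mul_le_of_le_one_right (norm_nonneg _) (h1 n _)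
    · exact Eventually.of_forall fun x => (hlim _).const_mul _
  exact le_of_tendsto ((htend _).sub (by simpa using htend 0)).abs (Eventually.of_forall fun n =>
    abs_setIntegral_translate_sub_le hΩ hf hvar hS hSΩ (hη n) (hc n) (h1 n) hh (hmove n))

end Translation

theorem exists_contDiff_tendsto_indicator {E : Type*} [NormedAddCommGroup E] [NormedSpace ℝ E]
    [FiniteDimensional ℝ E] {U : Set E} (hU : IsOpen U) :
    ∃ φ : ℕ → E → ℝ, (∀ n, ContDiff ℝ 1 (φ n)) ∧ (∀ n x, φ n x ∈ Icc (0 : ℝ) 1) ∧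
      (∀ n, ∀ x ∉ U, φ n x = 0) ∧
      ∀ x, Tendsto (fun n => φ n x) atTop (𝓝 (U.indicator 1 x)) := by
  obtain ⟨φ, hsupp, hφ, hrange⟩ := hU.exists_contDiff_support_eq (n := 1)
  have h01 : ∀ x, 0 ≤ φ x ∧ φ x ≤ 1 := fun x => hrange ⟨x, rfl⟩
  have h0 : ∀ x ∉ U, φ x = 0 := fun x hx => by rwa [← hsupp, Function.notMem_support] at hx
  refine ⟨fun n x => 1 - (1 - φ x) ^ n, fun n => contDiff_const.sub ((contDiff_const.sub hφ).pow n),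
    fun n x => ?_, fun n x hx => by simp [h0 x hx], fun x => ?_⟩
  · have hnonneg : 0 ≤ 1 - φ x := sub_nonneg.2 (h01 x).2
    exact ⟨sub_nonneg.2 (pow_le_one₀ hnonneg (by linarith [h01 x])),
      sub_le_self _ (pow_nonneg hnonneg n)⟩
  · by_cases hx : x ∈ U
    · have hpos : 0 < φ x := (h01 x).1.lt_of_ne' (by rwa [← hsupp] at hx)
      have hpow := tendsto_pow_atTop_nhds_zero_of_lt_one (r := 1 - φ x) (by linarith [h01 x])
        (by linarith)
      simpa [hx] using hpow.const_sub 1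
    · simp [hx, h0 x hx]

theorem abs_sum_le_of_forall_ne {ι : Type*} (K : Finset ι) {a : ι → ℝ} {p : ι} {C : ℝ}
    (h0 : ∀ x, x ≠ p → a x = 0) (hp : |a p| ≤ C) : |∑ x ∈ K, a x| ≤ C := by
  by_cases hpK : p ∈ K
  · rwa [Finset.sum_eq_single_of_mem p hpK fun x _ hx => h0 x hx]
  · rw [Finset.sum_eq_zero fun x hx => h0 x fun h => hpK (h ▸ hx), abs_zero]
    exact (abs_nonneg _).trans hp

theorem exists_contDiff_tendsto_sum_indicator_odcube (s : ℤ) (K : Finset (Cell d))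
    {ε : Cell d → ℝ} (hε : ∀ x, |ε x| ≤ 1) :
    ∃ η : ℕ → Ed d → ℝ, (∀ n, ContDiff ℝ 1 (η n)) ∧ (∀ n y, |η n y| ≤ 1) ∧
      (∀ n, tsupport (η n) ⊆ ⋃ x ∈ K, closure (dcube s x)) ∧
      ∀ y, Tendsto (fun n => η n y) atTop (𝓝 (∑ x ∈ K, ε x * (odcube s x).indicator 1 y)) := by
  choose φ hφ hφ1 hφ0 hφlim using fun x : Cell d =>
    exists_contDiff_tendsto_indicator (isOpen_odcube s x)
  refine ⟨fun n y => ∑ x ∈ K, ε x * φ x n y,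
    fun n => ContDiff.sum fun x _ => contDiff_const.mul (hφ x n), fun n y => ?_, fun n => ?_,
    fun y => tendsto_finsetSum _ fun x _ => (hφlim x y).const_mul _⟩
  · refine abs_sum_le_of_forall_ne K (p := idx s y) (fun x hx => ?_) ?_
    · rw [hφ0 x n y fun hy => hx (mem_dcube.1 (odcube_subset_dcube s x hy)).symm, mul_zero]
    · rw [abs_mul, abs_of_nonneg (hφ1 _ n y).1]
      exact mul_le_one₀ (hε _) (hφ1 _ n y).1 (hφ1 _ n y).2
  · refine closure_minimal (fun y hy => ?_)
      (K.finite_toSet.isClosed_biUnion fun x _ => isClosed_closure)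
    by_contra hyK
    refine hy (Finset.sum_eq_zero fun x hx => mul_eq_zero_of_right _ (hφ0 x n y fun hyx => hyK ?_))
    exact mem_biUnion (Finset.mem_coe.2 hx) (subset_closure (odcube_subset_dcube s x hyx))

theorem setIntegral_mul_sum_indicator {α ι : Type*} [MeasurableSpace α] {μ : Measure α}
    {f : α → ℝ} {S : Set α} (hf : IntegrableOn f S μ) (K : Finset ι) (ε : ι → ℝ) {T : ι → Set α}
    (hT : ∀ x ∈ K, MeasurableSet (T x)) (hTS : ∀ x ∈ K, T x ⊆ S) :
    ∫ y in S, f y * ∑ x ∈ K, ε x * (T x).indicator 1 y ∂μ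
      = ∑ x ∈ K, ε x * ∫ y in T x, f y ∂μ := by
  have hmul : ∀ y, f y * ∑ x ∈ K, ε x * (T x).indicator 1 y
      = ∑ x ∈ K, ε x * (T x).indicator f y := fun y => by
    rw [Finset.mul_sum]
    refine Finset.sum_congr rfl fun x _ => ?_
    by_cases hy : y ∈ T x <;> simp [hy, mul_comm]
  simp only [hmul]
  rw [integral_finsetSum _ fun x hx => (hf.indicator (hT x hx)).const_mul _]
  refine Finset.sum_congr rfl fun x hx => ?_
  rw [integral_const_mul, setIntegral_indicator (hT x hx), inter_eq_right.2 (hTS x hx)]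

theorem setIntegral_mul_sum_indicator_odcube {f : Ed d → ℝ} {S : Set (Ed d)}
    (hf : IntegrableOn f S) (s : ℤ) (K : Finset (Cell d)) (ε : Cell d → ℝ) (τ : Cell d → Cell d)
    (hS : ∀ x ∈ K, dcube s (τ x) ⊆ S) :
    ∫ y in S, f y * ∑ x ∈ K, ε x * (odcube s (τ x)).indicator 1 y
      = ∑ x ∈ K, ε x * ∫ y in dcube s (τ x), f y := by
  rw [setIntegral_mul_sum_indicator hf K ε (fun x _ => (isOpen_odcube s (τ x)).measurableSet)
    fun x hx => (odcube_subset_dcube s _).trans (hS x hx)]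
  exact Finset.sum_congr rfl fun x _ => by rw [setIntegral_congr_set (odcube_ae_eq_dcube s _)]

section Average

variable {Ω : Set (Ed d)} {f : Ed d → ℝ}

theorem abs_sum_mul_setIntegral_sub_le (hΩ : IsOpen Ω) (hf : LocallyIntegrableOn f Ω)
    (hvar : var Ω f < ∞) (s : ℤ) (j : Fin d) (K : Finset (Cell d))
    (hK : ∀ x ∈ K, closure (dcube s x) ⊆ Ω ∧ closure (dcube s (nbr (1, j) x)) ⊆ Ω)
    {ε : Cell d → ℝ} (hε : ∀ x, |ε x| ≤ 1) :
    |∑ x ∈ K, ε x * ((∫ y in dcube s (nbr (1, j) x), f y) - ∫ y in dcube s x, f y)|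
      ≤ 2 ^ s * (var Ω f).toReal := by
  obtain ⟨η, hη, hη1, hηsupp, hηlim⟩ := exists_contDiff_tendsto_sum_indicator_odcube s K hε
  set S : Set (Ed d) := ⋃ x ∈ K, (closure (dcube s x) ∪ closure (dcube s (nbr (1, j) x)))
  have hS : IsCompact S := K.isCompact_biUnion fun x _ =>
    (isCompact_closure_dcube s x).union (isCompact_closure_dcube s _)
  have hSΩ : S ⊆ Ω := iUnion₂_subset fun x hx => union_subset (hK x hx).1 (hK x hx).2
  have hKS : ∀ x ∈ K, dcube s x ⊆ S ∧ dcube s (nbr (1, j) x) ⊆ S := fun x hx =>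
    ⟨fun y hy => mem_biUnion (Finset.mem_coe.2 hx) (Or.inl (subset_closure hy)),
      fun y hy => mem_biUnion (Finset.mem_coe.2 hx) (Or.inr (subset_closure hy))⟩
  have hfS : IntegrableOn f S := hf.integrableOn_compact_subset hSΩ hS
  have hηc : ∀ n, HasCompactSupport (η n) := fun n =>
    (K.isCompact_biUnion fun x _ => isCompact_closure_dcube s x).of_isClosed_subset
      (isClosed_tsupport _) (hηsupp n)
  have hle := abs_setIntegral_translate_sub_le_of_tendsto hΩ hf hvar hS hSΩ hη hηc hη1 hηlim
    (j := j) (h := 2 ^ s) (by positivity) fun n y hy t ht => by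
      obtain ⟨x, hx, hyx⟩ := mem_iUnion₂.1 (hηsupp n hy)
      exact mem_iUnion₂.2 ⟨x, hx, add_single_mem_closure_union ht hyx⟩
  have hshift : ∀ x y, (odcube s x).indicator (1 : Ed d → ℝ) (y - EuclideanSpace.single j (2 ^ s))
      = (odcube s (nbr (1, j) x)).indicator 1 y := fun x y => by
    classical
    simp only [indicator_apply, sub_single_mem_odcube, Pi.one_apply]
  simp only [hshift] at hle
  rw [setIntegral_mul_sum_indicator_odcube hfS s K ε (nbr (1, j)) fun x hx => (hKS x hx).2,
    setIntegral_mul_sum_indicator_odcube hfS s K ε (fun x => x) fun x hx => (hKS x hx).1,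
    ← Finset.sum_sub_distrib] at hle
  simpa only [mul_sub] using hle

theorem sum_abs_setIntegral_sub_le (hΩ : IsOpen Ω) (hf : LocallyIntegrableOn f Ω)
    (hvar : var Ω f < ∞) (s : ℤ) (j : Fin d) (K : Finset (Cell d))
    (hK : ∀ x ∈ K, closure (dcube s x) ⊆ Ω ∧ closure (dcube s (nbr (1, j) x)) ⊆ Ω) :
    ∑ x ∈ K, |(∫ y in dcube s (nbr (1, j) x), f y) - ∫ y in dcube s x, f y|
      ≤ 2 ^ s * (var Ω f).toReal := by
  have hle := abs_sum_mul_setIntegral_sub_le hΩ hf hvar s j K hK (ε := fun x =>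
    SignType.sign ((∫ y in dcube s (nbr (1, j) x), f y) - ∫ y in dcube s x, f y)) fun x => by
      cases SignType.sign ((∫ y in dcube s (nbr (1, j) x), f y) - ∫ y in dcube s x, f y) <;> simp
  simp only [sign_mul_self] at hle
  exact (le_abs_self _).trans hle

/-- The cells of side length `2^s` whose cube is admissible for the local maximal function. -/
def admSet (Ω : Set (Ed d)) (s : ℤ) : Set (Cell d) := {m | closure (dcube s m) ⊆ Ω}

/-- The function on the grid of side length `2^s` given by the averages of `f`. -/
def cavg (f : Ed d → ℝ) (s : ℤ) (m : Cell d) : ℝ := ⨍ z in dcube s m, f z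

theorem cavg_eq_div (f : Ed d → ℝ) (s : ℤ) (m : Cell d) :
    cavg f s m = (∫ z in dcube s m, f z) / ((2 : ℝ) ^ s) ^ d := by
  rw [cavg, setAverage_eq, volume_real_dcube, smul_eq_mul, inv_mul_eq_div]

open Classical in
theorem varDensity_cavg_mul (f : Ed d → ℝ) (s : ℤ) (A : Set (Cell d)) (x : Cell d) :
    varDensity A (cavg f s) x * ENNReal.ofReal (((2 : ℝ) ^ s) ^ d)
      = ∑ j, if x ∈ A ∧ nbr (1, j) x ∈ A then
        ENNReal.ofReal |(∫ y in dcube s (nbr (1, j) x), f y) - ∫ y in dcube s x, f y| else 0 := by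
  have hpos : (0 : ℝ) < ((2 : ℝ) ^ s) ^ d := by positivity
  rw [varDensity, Finset.sum_mul]
  refine Finset.sum_congr rfl fun j _ => ?_
  split_ifs
  · rw [← ENNReal.ofReal_mul (abs_nonneg _), cavg_eq_div, cavg_eq_div, ← sub_div, abs_div,
      abs_of_pos hpos, div_mul_cancel₀ _ hpos.ne']
  · exact zero_mul _

theorem gridVar_cavg_mul_le (hΩ : IsOpen Ω) (hf : LocallyIntegrableOn f Ω) (hvar : var Ω f < ∞)
    (s : ℤ) :
    gridVar (admSet Ω s) (cavg f s) * ENNReal.ofReal (((2 : ℝ) ^ s) ^ d)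
      ≤ d * (ENNReal.ofReal (2 ^ s) * var Ω f) := by
  classical
  rw [gridVar, ← ENNReal.tsum_mul_right, ENNReal.tsum_eq_iSup_sum]
  refine iSup_le fun K => ?_
  simp only [varDensity_cavg_mul]
  rw [Finset.sum_comm]
  have hdir : ∀ j : Fin d, ∑ x ∈ K, (if x ∈ admSet Ω s ∧ nbr (1, j) x ∈ admSet Ω s then
      ENNReal.ofReal |(∫ y in dcube s (nbr (1, j) x), f y) - ∫ y in dcube s x, f y| else 0)
      ≤ ENNReal.ofReal (2 ^ s) * var Ω f := fun j => by
    rw [← Finset.sum_filter, ← ENNReal.ofReal_sum_of_nonneg fun _ _ => abs_nonneg _,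
      ← ENNReal.ofReal_toReal hvar.ne, ← ENNReal.ofReal_mul (by positivity)]
    exact ENNReal.ofReal_le_ofReal (sum_abs_setIntegral_sub_le hΩ hf hvar s j _
      fun x hx => (Finset.mem_filter.1 hx).2)
  refine (Finset.sum_le_sum fun j _ => hdir j).trans_eq ?_
  simp

end Average

/-! ### Truncations of the maximal function -/

/-- The maximal function of `f` with respect to the family of dyadic cubes `A`. -/
def maxFun (A : ℕ → Set (Cell d)) (f : Cell d → ℝ) (x : Cell d) : ℝ :=
  sSup ((fun k => avg f k (anc k x)) '' {k | anc k x ∈ A k})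

theorem isMaxFun_maxFun {A : ℕ → Set (Cell d)} (hA : IsAdmissible A) (f : Cell d → ℝ) :
    IsMaxFun A f (maxFun A f) := by
  intro x hx t
  obtain ⟨K, hK⟩ := hA.bdd
  have hfin : {k | anc k x ∈ A k}.Finite := (finite_Iic K).subset fun k hk => hK k _ hk
  rw [maxFun, lt_csSup_iff (hfin.image _).bddAbove ⟨_, 0, by simpa using hx, rfl⟩]
  simp

section WeakType

variable {h : Cell d → ℝ} {B : ℝ} {k : ℕ} {m : Cell d}

open Classical in
theorem mul_card_lt_avg_le (hh : ∀ x, 0 ≤ h x) (hB : 0 ≤ B) (k : ℕ) (m : Cell d) :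
    B * ({x ∈ cube k m | ∃ j ≤ k, B < avg h j (anc j x)} : Finset _).card
      ≤ ∑ x ∈ cube k m, h x := by
  induction k generalizing m with
  | zero =>
    by_cases hm : B < h m
    · simpa [Finset.filter_singleton, hm] using hm.le
    · simpa [Finset.filter_singleton, hm] using hh m
  | succ k ih =>
    by_cases hm : B < avg h (k + 1) m
    · have hcard : ({x ∈ cube (k + 1) m | ∃ j ≤ k + 1, B < avg h j (anc j x)} : Finset _).card
          ≤ (2 ^ (k + 1)) ^ d := (Finset.card_filter_le _ _).trans_eq (card_cube _ _)
      rw [← avg_mul]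
      gcongr
      · exact hB.trans hm.le
      · exact mod_cast hcard
    · have htop (p : Cell d) (hp : p ∈ cube 1 m) (x : Cell d) (hx : x ∈ cube k p) :
          (∃ j ≤ k + 1, B < avg h j (anc j x)) ↔ ∃ j ≤ k, B < avg h j (anc j x) := by
        have hx' : anc (k + 1) x = m := by rw [← anc_anc, mem_cube.1 hx, mem_cube.1 hp]
        refine ⟨fun ⟨j, hj, hlt⟩ => ⟨j, ?_, hlt⟩, fun ⟨j, hj, hlt⟩ => ⟨j, by omega, hlt⟩⟩
        refine Nat.le_of_lt_succ (hj.lt_of_ne fun h => hm ?_)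
        rwa [h, hx'] at hlt
      rw [Finset.card_filter, sum_cube_add _ k 1, sum_cube_add _ k 1, Nat.cast_sum, Finset.mul_sum]
      refine Finset.sum_le_sum fun p hp => ?_
      rw [← Finset.card_filter, Finset.filter_congr (htop p hp)]
      exact ih p

open Classical in
theorem card_cube_le_two_mul_card_avg_le (hh : ∀ x, 0 ≤ h x) (hB : 0 < B)
    (havg : 2 * avg h k m ≤ B) :
    ((2 ^ k) ^ d : ℝ) ≤
      2 * ({x ∈ cube k m | ∀ j ≤ k, avg h j (anc j x) ≤ B} : Finset _).card := by
  have hcount := Finset.card_filter_add_card_filter_not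
    (fun x => ∀ j ≤ k, avg h j (anc j x) ≤ B) (s := cube k m)
  simp only [not_forall, not_le, exists_prop, card_cube] at hcount
  have hcount' : (({x ∈ cube k m | ∀ j ≤ k, avg h j (anc j x) ≤ B} : Finset _).card : ℝ) +
      ({x ∈ cube k m | ∃ j ≤ k, B < avg h j (anc j x)} : Finset _).card = (2 ^ k) ^ d :=
    mod_cast hcount
  have hweak := mul_card_lt_avg_le hh hB.le k m
  rw [← avg_mul] at hweak
  have hbad : B * (2 * ({x ∈ cube k m | ∃ j ≤ k, B < avg h j (anc j x)} : Finset _).card) ≤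
      B * (2 ^ k) ^ d := by nlinarith
  linarith [le_of_mul_le_mul_left hbad hB]

theorem sum_posPart_sub_mul_card_le {α : Type*} {g : α → ℝ} {B : ℝ} {Q G : Finset α}
    (hGQ : G ⊆ Q) (hG : ∀ y ∈ G, g y ≤ B) :
    (∑ x ∈ Q, max (g x - B) 0) * G.card ≤ ∑ x ∈ Q, ∑ y ∈ Q, |g x - g y| := by
  rw [Finset.sum_mul]
  refine Finset.sum_le_sum fun x _ => ?_
  calc max (g x - B) 0 * G.card = ∑ _y ∈ G, max (g x - B) 0 := by
        rw [Finset.sum_const, nsmul_eq_mul, mul_comm]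
    _ ≤ ∑ y ∈ G, |g x - g y| := Finset.sum_le_sum fun y hy =>
        max_le ((sub_le_sub_left (hG y hy) _).trans (le_abs_self _)) (abs_nonneg _)
    _ ≤ ∑ y ∈ Q, |g x - g y| :=
        Finset.sum_le_sum_of_subset_of_nonneg hGQ fun _ _ _ => abs_nonneg _

/-- The weak type estimate for the averages of `h` provides the set of density `1 / 2` on which
`g ≤ B`, and the Poincaré inequality does the rest. -/
theorem sum_posPart_sub_le {g : Cell d → ℝ} (hh : ∀ x, 0 ≤ h x) (hB : 0 < B)
    (havg : 2 * avg h k m ≤ B)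
    (hg : ∀ x ∈ cube k m, (∀ j ≤ k, avg h j (anc j x) ≤ B) → g x ≤ B) :
    ∑ x ∈ cube k m, max (g x - B) 0 ≤ 2 * 2 ^ k * finVar g (cube k m) := by
  classical
  set G : Finset (Cell d) := {x ∈ cube k m | ∀ j ≤ k, avg h j (anc j x) ≤ B}
  set T := ∑ x ∈ cube k m, max (g x - B) 0
  have hpoincare := sum_box_sum_box_abs_sub_le g (fun i => 2 ^ k * m i) (2 ^ k)
  rw [← cube] at hpoincare
  push_cast at hpoincare
  have hprod : T * G.card ≤ (2 ^ k) ^ (d + 1) * finVar g (cube k m) :=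
    (sum_posPart_sub_mul_card_le (Finset.filter_subset _ _) fun y hy =>
      hg y (Finset.mem_filter.1 hy).1 (Finset.mem_filter.1 hy).2).trans hpoincare
  refine le_of_mul_le_mul_left (a := ((2 : ℝ) ^ k) ^ d) ?_ (by positivity)
  calc (2 ^ k) ^ d * T ≤ 2 * G.card * T := by
        gcongr; exact card_cube_le_two_mul_card_avg_le hh hB havg
    _ = 2 * (T * G.card) := by ring
    _ ≤ 2 * ((2 ^ k) ^ (d + 1) * finVar g (cube k m)) :=
        mul_le_mul_of_nonneg_left hprod two_pos.le
    _ = (2 ^ k) ^ d * (2 * 2 ^ k * finVar g (cube k m)) := by ring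

end WeakType

section GridFunction

variable {K : Set (Ed d)}

theorem measurable_idx (s : ℤ) : Measurable (idx s : Ed d → Cell d) := by
  refine measurable_pi_lambda _ fun i => Int.measurable_floor.comp ?_
  have hcont : Continuous fun x : Ed d => x i / (2 : ℝ) ^ s := by fun_prop
  exact hcont.measurable

theorem measurable_comp_idx (s : ℤ) (u : Cell d → ℝ) : Measurable fun y : Ed d => u (idx s y) :=
  (measurable_of_countable u).comp (measurable_idx s)

theorem iUnion_dcube (s : ℤ) : ⋃ m, dcube s m = (univ : Set (Ed d)) :=
  eq_univ_of_forall fun x => mem_iUnion.2 ⟨idx s x, mem_dcube.2 rfl⟩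

theorem setLIntegral_comp_idx (s : ℤ) (u : Cell d → ℝ≥0∞) (m : Cell d) :
    ∫⁻ y in dcube s m, u (idx s y) = u m * ENNReal.ofReal (((2 : ℝ) ^ s) ^ d) := by
  rw [setLIntegral_congr_fun (g := fun _ => u m) (measurableSet_dcube s m)
    fun y hy => by rw [mem_dcube.1 hy], setLIntegral_const, volume_dcube]

theorem setLIntegral_dcube_add_comp_idx (s : ℤ) (k : ℕ) (u : Cell d → ℝ≥0∞) (m : Cell d) :
    ∫⁻ y in dcube (s + k) m, u (idx s y)
      = (∑ p ∈ cube k m, u p) * ENNReal.ofReal (((2 : ℝ) ^ s) ^ d) := by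
  rw [dcube_add_eq_iUnion, lintegral_biUnion_finset (fun p _ q _ h => disjoint_dcube h)
    (fun p _ => measurableSet_dcube s p), Finset.sum_mul]
  exact Finset.sum_congr rfl fun p _ => setLIntegral_comp_idx s u p

theorem lintegral_comp_idx (s : ℤ) (u : Cell d → ℝ≥0∞) :
    ∫⁻ y : Ed d, u (idx s y) = (∑' m, u m) * ENNReal.ofReal (((2 : ℝ) ^ s) ^ d) := by
  rw [← setLIntegral_univ, ← iUnion_dcube s, lintegral_iUnion (measurableSet_dcube s)
    fun m p h => disjoint_dcube h, ← ENNReal.tsum_mul_right]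
  exact tsum_congr fun m => setLIntegral_comp_idx s u m

theorem finite_idx_image (s : ℤ) (hK : Bornology.IsBounded K) : (idx s '' K).Finite := by
  obtain ⟨C, hC⟩ := hK.exists_norm_le
  have habs : ∀ x ∈ K, ∀ i, |x i| ≤ C := fun x hx i => (PiLp.norm_apply_le x i).trans (hC x hx)
  refine (Set.finite_Icc (fun _ => ⌊-C / (2 : ℝ) ^ s⌋) (fun _ => ⌊C / (2 : ℝ) ^ s⌋)).subset ?_
  rintro _ ⟨x, hx, rfl⟩
  constructor <;> intro i
  · exact Int.floor_le_floor (by gcongr; exact (abs_le.1 (habs x hx i)).1)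
  · exact Int.floor_le_floor (by gcongr; exact (abs_le.1 (habs x hx i)).2)

theorem exists_abs_comp_idx_le (s : ℤ) (u : Cell d → ℝ) (hK : Bornology.IsBounded K) :
    ∃ c, ∀ y ∈ K, |u (idx s y)| ≤ c := by
  obtain ⟨c, hc⟩ := ((finite_idx_image s hK).image fun m => |u m|).bddAbove
  exact ⟨c, fun y hy => hc ⟨_, ⟨y, hy, rfl⟩, rfl⟩⟩

theorem locallyIntegrable_comp_idx (s : ℤ) (u : Cell d → ℝ) :
    LocallyIntegrable fun y : Ed d => u (idx s y) := by
  rw [locallyIntegrable_iff]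
  intro K hK
  obtain ⟨c, hc⟩ := exists_abs_comp_idx_le s u hK.isBounded
  refine IntegrableOn.of_bound hK.measure_lt_top
    (measurable_comp_idx s u).aestronglyMeasurable c ?_
  exact (ae_restrict_iff' hK.measurableSet).2 (Eventually.of_forall hc)

end GridFunction

section CellAverage

theorem avg_mono {u v : Cell d → ℝ} {k : ℕ} {m : Cell d} (h : ∀ x ∈ cube k m, u x ≤ v x) :
    avg u k m ≤ avg v k m :=
  div_le_div_of_nonneg_right (Finset.sum_le_sum h) (by positivity)

theorem avg_const (c : ℝ) (k : ℕ) (m : Cell d) : avg (fun _ => c) k m = c := by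
  rw [avg, Finset.sum_const, card_cube, nsmul_eq_mul]
  push_cast
  exact mul_div_cancel_left₀ _ (by positivity)

theorem abs_cavg_le (f : Ed d → ℝ) (s : ℤ) (m : Cell d) :
    |cavg f s m| ≤ cavg (fun y => |f y|) s m := by
  rw [cavg_eq_div, cavg_eq_div, abs_div,
    abs_of_pos (show (0 : ℝ) < ((2 : ℝ) ^ s) ^ d by positivity)]
  gcongr
  exact abs_integral_le_integral_abs

theorem avg_cavg {f : Ed d → ℝ} (s : ℤ) (k : ℕ) (m : Cell d)
    (hf : IntegrableOn f (dcube (s + k) m)) : avg (cavg f s) k m = cavg f (s + k) m := by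
  have hsum : ∑ p ∈ cube k m, ∫ z in dcube s p, f z = ∫ z in dcube (s + k) m, f z := by
    rw [dcube_add_eq_iUnion, integral_biUnion_finset _ (fun p _ => measurableSet_dcube s p)
      (fun p _ q _ h => disjoint_dcube h)]
    exact fun p hp => hf.mono_set (dcube_subset_dcube (mem_cube.1 hp))
  rw [avg, cavg_eq_div, ← hsum]
  simp only [cavg_eq_div]
  rw [← Finset.sum_div, div_div, zpow_add₀ two_ne_zero, zpow_natCast, mul_pow]

end CellAverage

section GridMax

variable {Ω : Set (Ed d)} {f : Ed d → ℝ} {n : ℕ} {s : ℤ} {k : ℕ} {m : Cell d} {y : Ed d}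

theorem mem_admSet_of_mem_cube {x : Cell d} (h : m ∈ admSet Ω (s + k)) (hx : x ∈ cube k m) :
    x ∈ admSet Ω s :=
  (closure_mono (dcube_subset_dcube (mem_cube.1 hx))).trans h

theorem integrableOn_dcube (hf : LocallyIntegrableOn f Ω) (h : m ∈ admSet Ω s) :
    IntegrableOn f (dcube s m) :=
  (hf.integrableOn_compact_subset h (isCompact_closure_dcube s m)).mono_set subset_closure

/-- The cubes that are admissible for the local maximal function and have side length between
`2^(-n)` and `2^n`. They are indexed by generations counted from the grid of side length
`2^(-n)`. -/
def gridAdm (Ω : Set (Ed d)) (n k : ℕ) : Set (Cell d) := {m | k ≤ 2 * n ∧ m ∈ admSet Ω (-n + k)}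

theorem isAdmissible_gridAdm (Ω : Set (Ed d)) (n : ℕ) : IsAdmissible (gridAdm Ω n) where
  down k m h := by
    refine ⟨by have := h.1; omega, mem_admSet_of_mem_cube (k := 1) ?_ (mem_cube.2 rfl)⟩
    simpa [add_assoc] using h.2
  bdd := ⟨2 * n, fun _ _ h => h.1⟩

theorem gridAdm_zero (Ω : Set (Ed d)) (n : ℕ) : gridAdm Ω n 0 = admSet Ω (-n) := by
  ext m; simp [gridAdm]

/-- The maximal function of `f` over the cubes of side length between `2^(-n)` and `2^n`, as a
function on the grid of side length `2^(-n)`. -/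
def gridMax (Ω : Set (Ed d)) (f : Ed d → ℝ) (n : ℕ) : Cell d → ℝ :=
  maxFun (gridAdm Ω n) (cavg f (-n))

theorem gridVar_gridMax_mul_le (hΩ : IsOpen Ω) (hf : LocallyIntegrableOn f Ω) (hvar : var Ω f < ∞)
    (n : ℕ) :
    gridVar (admSet Ω (-n)) (gridMax Ω f n) * ENNReal.ofReal (((2 : ℝ) ^ (-n : ℤ)) ^ d)
      ≤ gridConst d * d * (ENNReal.ofReal (2 ^ (-n : ℤ)) * var Ω f) := by
  have hmax := gridVar_max_le (isAdmissible_gridAdm Ω n)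
    (isMaxFun_maxFun (isAdmissible_gridAdm Ω n) (cavg f (-n)))
  rw [gridAdm_zero] at hmax
  calc _ ≤ gridConst d * gridVar (admSet Ω (-n)) (cavg f (-n))
        * ENNReal.ofReal (((2 : ℝ) ^ (-n : ℤ)) ^ d) := mul_le_mul_left hmax _
    _ ≤ gridConst d * (d * (ENNReal.ofReal (2 ^ (-n : ℤ)) * var Ω f)) := by
        rw [mul_assoc]
        exact mul_le_mul_right (gridVar_cavg_mul_le hΩ hf hvar _) _
    _ = _ := by ring

/-- The averages of `f` over the admissible cubes containing `y`. -/
def admAvgs (Ω : Set (Ed d)) (f : Ed d → ℝ) (y : Ed d) : Set ℝ :=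
  (fun s => cavg f s (idx s y)) '' {s | idx s y ∈ admSet Ω s}

/-- The averages of `f` over the admissible cubes containing `y` of side length between `2^(-n)`
and `2^n`. -/
def truncAvgs (Ω : Set (Ed d)) (f : Ed d → ℝ) (n : ℕ) (y : Ed d) : Set ℝ :=
  (fun s => cavg f s (idx s y)) '' {s | idx s y ∈ admSet Ω s ∧ s.natAbs ≤ n}

theorem dyadicMaxFun_eq_sSup (Ω : Set (Ed d)) (f : Ed d → ℝ) (y : Ed d) :
    dyadicMaxFun Ω f y = sSup (admAvgs Ω f y) := by
  unfold dyadicMaxFun admAvgs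
  congr 1
  ext t
  constructor
  · rintro ⟨_, ⟨s, m, rfl⟩, hy, hcl, rfl⟩
    obtain rfl : idx s y = m := mem_dcube.1 hy
    exact ⟨s, hcl, rfl⟩
  · rintro ⟨s, hs, rfl⟩
    exact ⟨_, ⟨s, _, rfl⟩, mem_dcube.2 rfl, hs, rfl⟩

theorem gridMax_idx (hf : LocallyIntegrableOn f Ω) (n : ℕ) (y : Ed d) :
    gridMax Ω f n (idx (-n) y) = sSup (truncAvgs Ω f n y) := by
  unfold gridMax maxFun truncAvgs
  congr 1
  ext t
  simp only [mem_image, mem_ofPred_eq, gridAdm, anc_idx]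
  constructor
  · rintro ⟨k, ⟨hk, hA⟩, rfl⟩
    exact ⟨-n + k, ⟨hA, by omega⟩, (avg_cavg _ _ _ (integrableOn_dcube hf hA)).symm⟩
  · rintro ⟨s, ⟨hA, hs⟩, rfl⟩
    obtain ⟨k, rfl⟩ : ∃ k : ℕ, s = -n + k := ⟨(s + n).toNat, by omega⟩
    exact ⟨k, ⟨by omega, hA⟩, avg_cavg _ _ _ (integrableOn_dcube hf hA)⟩

theorem finite_truncAvgs (Ω : Set (Ed d)) (f : Ed d → ℝ) (n : ℕ) (y : Ed d) :
    (truncAvgs Ω f n y).Finite :=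
  ((Set.finite_Icc (-n : ℤ) n).subset fun s hs =>
    ⟨by have := hs.2; omega, by have := hs.2; omega⟩).image _

theorem cavg_le_gridMax (hf : LocallyIntegrableOn f Ω) (hs : idx s y ∈ admSet Ω s)
    (hsn : s.natAbs ≤ n) : cavg f s (idx s y) ≤ gridMax Ω f n (idx (-n) y) := by
  rw [gridMax_idx hf]
  exact le_csSup (finite_truncAvgs Ω f n y).bddAbove ⟨s, ⟨hs, hsn⟩, rfl⟩

theorem gridMax_mono (hf : LocallyIntegrableOn f Ω) {n' : ℕ} (hn : n ≤ n')
    (hs : idx s y ∈ admSet Ω s) (hsn : s.natAbs ≤ n) :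
    gridMax Ω f n (idx (-n) y) ≤ gridMax Ω f n' (idx (-n') y) := by
  rw [gridMax_idx hf]
  refine csSup_le ⟨_, s, ⟨hs, hsn⟩, rfl⟩ ?_
  rintro _ ⟨t, ⟨ht, htn⟩, rfl⟩
  exact cavg_le_gridMax hf ht (htn.trans hn)

theorem tendsto_gridMax (hf : LocallyIntegrableOn f Ω) (hs : idx s y ∈ admSet Ω s)
    (hb : BddAbove (admAvgs Ω f y)) :
    Tendsto (fun n : ℕ => gridMax Ω f n (idx (-n) y)) atTop (𝓝 (dyadicMaxFun Ω f y)) := by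
  refine tendsto_order.2 ⟨fun a ha => ?_, fun a ha => ?_⟩
  · rw [dyadicMaxFun_eq_sSup] at ha
    obtain ⟨_, ⟨t, ht, rfl⟩, hat⟩ := exists_lt_of_lt_csSup (s := admAvgs Ω f y) ⟨_, s, hs, rfl⟩ ha
    filter_upwards [eventually_ge_atTop t.natAbs] with n hn
    exact hat.trans_le (cavg_le_gridMax hf ht hn)
  · filter_upwards [eventually_ge_atTop s.natAbs] with n hn
    refine lt_of_le_of_lt ?_ ha
    rw [gridMax_idx hf, dyadicMaxFun_eq_sSup]
    exact csSup_le_csSup hb ⟨_, s, ⟨hs, hn⟩, rfl⟩ (image_mono fun t ht => ht.1)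

end GridMax

/-! ### Integrability of the maximal function -/

section Level

variable {Ω : Set (Ed d)} {f : Ed d → ℝ} {n : ℕ} {s : ℤ} {k : ℕ} {m : Cell d}

theorem ofReal_finVar_le_gridVar {S : Set (Cell d)} (u : Cell d → ℝ) {B : Finset (Cell d)}
    (hB : ∀ x ∈ B, x ∈ S) : ENNReal.ofReal (finVar u B) ≤ gridVar S u :=
  (ofReal_finVar_le_sum_varDensity u hB).trans (ENNReal.sum_le_tsum B)

theorem gridVar_cavg_ne_top (hΩ : IsOpen Ω) (hf : LocallyIntegrableOn f Ω) (hvar : var Ω f < ∞)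
    (s : ℤ) : gridVar (admSet Ω s) (cavg f s) ≠ ∞ := by
  have hvol : ENNReal.ofReal (((2 : ℝ) ^ s) ^ d) ≠ 0 := by
    rw [Ne, ENNReal.ofReal_eq_zero, not_le]; positivity
  have hfin : (d : ℝ≥0∞) * (ENNReal.ofReal (2 ^ s) * var Ω f) ≠ ∞ :=
    ENNReal.mul_ne_top (by simp) (ENNReal.mul_ne_top ENNReal.ofReal_ne_top hvar.ne)
  exact (ENNReal.lt_top_of_mul_ne_top_left
    (ne_top_of_le_ne_top hfin (gridVar_cavg_mul_le hΩ hf hvar s)) hvol).ne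

theorem cavg_anc_le (hΩ : IsOpen Ω) (hf : LocallyIntegrableOn f Ω) (hvar : var Ω f < ∞)
    (h : anc k m ∈ admSet Ω (s + k)) :
    cavg f (s + k) (anc k m) ≤ |cavg f s m| + (gridVar (admSet Ω s) (cavg f s)).toReal := by
  rw [← avg_cavg s k _ (integrableOn_dcube hf h), ← avg_const (|cavg f s m| + _) k (anc k m)]
  refine avg_mono fun x hx => ?_
  have hosc : |cavg f s x - cavg f s m| ≤ finVar (cavg f s) (cube k (anc k m)) :=
    abs_sub_le_finVar hx (mem_cube.2 rfl)
  have hfin : finVar (cavg f s) (cube k (anc k m)) ≤ (gridVar (admSet Ω s) (cavg f s)).toReal :=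
    (ENNReal.ofReal_le_iff_le_toReal (gridVar_cavg_ne_top hΩ hf hvar s)).1
      (ofReal_finVar_le_gridVar _ fun x hx => mem_admSet_of_mem_cube h hx)
  linarith [le_abs_self (cavg f s x - cavg f s m), le_abs_self (cavg f s m)]

/-- A level which the averages over the cubes containing a given cube do not exceed, and which the
averages over its subcubes exceed on at most half of it. -/
def level (Ω : Set (Ed d)) (f : Ed d → ℝ) (s : ℤ) (m : Cell d) : ℝ :=
  1 + |cavg f s m| + (gridVar (admSet Ω s) (cavg f s)).toReal + 2 * cavg (fun y => |f y|) s m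

theorem cavg_abs_nonneg (f : Ed d → ℝ) (s : ℤ) (m : Cell d) : 0 ≤ cavg (fun y => |f y|) s m :=
  (abs_nonneg _).trans (abs_cavg_le f s m)

theorem level_pos (Ω : Set (Ed d)) (f : Ed d → ℝ) (s : ℤ) (m : Cell d) : 0 < level Ω f s m := by
  have hnonneg := cavg_abs_nonneg f s m
  unfold level
  positivity

theorem two_mul_avg_abs_cavg_le_level (hf : LocallyIntegrableOn f Ω)
    (hQ : m ∈ admSet Ω (s + k)) :
    2 * avg (fun x => |cavg f s x|) k m ≤ level Ω f (s + k) m := by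
  have habs : avg (fun x => |cavg f s x|) k m ≤ cavg (fun y => |f y|) (s + k) m := by
    rw [← avg_cavg _ _ _ (integrableOn_dcube hf hQ).abs]
    exact avg_mono fun x _ => abs_cavg_le f _ x
  have hgrid : 0 ≤ (gridVar (admSet Ω (s + k)) (cavg f (s + k))).toReal := ENNReal.toReal_nonneg
  unfold level
  linarith [abs_nonneg (cavg f (s + k) m)]

theorem cavg_anc_le_level (hΩ : IsOpen Ω) (hf : LocallyIntegrableOn f Ω) (hvar : var Ω f < ∞)
    (h : anc k m ∈ admSet Ω (s + k)) : cavg f (s + k) (anc k m) ≤ level Ω f s m := by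
  unfold level
  linarith [cavg_anc_le hΩ hf hvar h, cavg_abs_nonneg f s m]

theorem gridMax_le_level (hΩ : IsOpen Ω) (hf : LocallyIntegrableOn f Ω) (hvar : var Ω f < ∞)
    (hQ : m ∈ admSet Ω (-n + k)) {x : Cell d} (hx : x ∈ cube k m)
    (hle : ∀ j ≤ k, avg (fun x => |cavg f (-n) x|) j (anc j x) ≤ level Ω f (-n + k) m) :
    gridMax Ω f n x ≤ level Ω f (-n + k) m := by
  refine csSup_le ⟨_, 0, ?_, rfl⟩ ?_
  · rw [mem_ofPred_eq, gridAdm_zero, anc_zero]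
    exact mem_admSet_of_mem_cube hQ hx
  rintro _ ⟨j, ⟨-, hj⟩, rfl⟩
  rcases le_total j k with hjk | hkj
  · exact (avg_mono fun x _ => le_abs_self _).trans (hle j hjk)
  · obtain ⟨i, rfl⟩ := Nat.exists_eq_add_of_le hkj
    simp only [← anc_anc, mem_cube.1 hx] at hj ⊢
    rw [avg_cavg _ _ _ (integrableOn_dcube hf hj)]
    push_cast at hj ⊢
    rw [← add_assoc] at hj ⊢
    exact cavg_anc_le_level hΩ hf hvar hj

end Level

section Integrable

variable {Ω : Set (Ed d)} {f : Ed d → ℝ} {n : ℕ} {s : ℤ} {k : ℕ} {m : Cell d} {K : Set (Ed d)}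

theorem sum_gridMax_sub_level_le (hΩ : IsOpen Ω) (hf : LocallyIntegrableOn f Ω)
    (hvar : var Ω f < ∞) (hQ : m ∈ admSet Ω (-n + k)) :
    ∑ x ∈ cube k m, max (gridMax Ω f n x - level Ω f (-n + k) m) 0
      ≤ 2 * 2 ^ k * finVar (gridMax Ω f n) (cube k m) :=
  sum_posPart_sub_le (fun _ => abs_nonneg _) (level_pos Ω f _ m)
    (two_mul_avg_abs_cavg_le_level hf hQ) fun _ => gridMax_le_level hΩ hf hvar hQ

theorem setLIntegral_gridMax_sub_level_le (hΩ : IsOpen Ω) (hf : LocallyIntegrableOn f Ω)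
    (hvar : var Ω f < ∞) (hn : -n ≤ s) (hQ : m ∈ admSet Ω s) :
    ∫⁻ y in dcube s m, ENNReal.ofReal (gridMax Ω f n (idx (-n) y) - level Ω f s m)
      ≤ gridConst d * d * (ENNReal.ofReal (2 * 2 ^ s) * var Ω f) := by
  obtain ⟨k, rfl⟩ : ∃ k : ℕ, s = -n + k := ⟨(s + n).toNat, by omega⟩
  set g := gridMax Ω f n
  set B := level Ω f (-n + k) m
  have hsum : ∑ x ∈ cube k m, ENNReal.ofReal (g x - B)
      ≤ ENNReal.ofReal (2 * 2 ^ k) * gridVar (admSet Ω (-n)) g := by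
    calc ∑ x ∈ cube k m, ENNReal.ofReal (g x - B)
        = ENNReal.ofReal (∑ x ∈ cube k m, max (g x - B) 0) := by
          rw [ENNReal.ofReal_sum_of_nonneg fun _ _ => le_max_right _ _]
          exact Finset.sum_congr rfl fun x _ => by simp [ENNReal.ofReal_max]
      _ ≤ ENNReal.ofReal (2 * 2 ^ k * finVar g (cube k m)) :=
          ENNReal.ofReal_le_ofReal (sum_gridMax_sub_level_le hΩ hf hvar hQ)
      _ = ENNReal.ofReal (2 * 2 ^ k) * ENNReal.ofReal (finVar g (cube k m)) :=
          ENNReal.ofReal_mul (by positivity)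
      _ ≤ _ := mul_le_mul_right
          (ofReal_finVar_le_gridVar _ fun x hx => mem_admSet_of_mem_cube hQ hx) _
  rw [setLIntegral_dcube_add_comp_idx (-n) k (fun x => ENNReal.ofReal (g x - B))]
  calc _ ≤ ENNReal.ofReal (2 * 2 ^ k) * gridVar (admSet Ω (-n)) g
        * ENNReal.ofReal (((2 : ℝ) ^ (-n : ℤ)) ^ d) := mul_le_mul_left hsum _
    _ ≤ ENNReal.ofReal (2 * 2 ^ k)
        * (gridConst d * d * (ENNReal.ofReal (2 ^ (-n : ℤ)) * var Ω f)) := by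
        rw [mul_assoc]
        exact mul_le_mul_right (gridVar_gridMax_mul_le hΩ hf hvar n) _
    _ = gridConst d * d *
        ((ENNReal.ofReal (2 * 2 ^ k) * ENNReal.ofReal (2 ^ (-n : ℤ))) * var Ω f) := by ring
    _ = _ := by
        rw [← ENNReal.ofReal_mul (by positivity), mul_assoc (2 : ℝ), add_comm (-n : ℤ),
          zpow_add₀ two_ne_zero, zpow_natCast]

theorem gridConst_mul_ne_top : gridConst d * d ≠ ∞ :=
  ENNReal.mul_ne_top (gridConst_ne_top d) (ENNReal.natCast_ne_top d)

/-- The supremum over `n` of the excess over `B` of the maximal function truncated at side lengths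
`2^(-n)` and `2^n`. Only truncations that include the cubes of side length `2^s` count: on an
admissible cube of this size they increase with `n`. -/
def excess (Ω : Set (Ed d)) (f : Ed d → ℝ) (s : ℤ) (B : ℝ) (y : Ed d) : ℝ≥0∞ :=
  ⨆ n : ℕ, ⨆ _ : s.natAbs ≤ n, ENNReal.ofReal (gridMax Ω f n (idx (-n) y) - B)

theorem le_excess (hn : s.natAbs ≤ n) (B : ℝ) (y : Ed d) :
    ENNReal.ofReal (gridMax Ω f n (idx (-n) y) - B) ≤ excess Ω f s B y :=
  le_iSup₂ (f := fun (n : ℕ) (_ : s.natAbs ≤ n) =>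
    ENNReal.ofReal (gridMax Ω f n (idx (-n) y) - B)) n hn

theorem measurable_gridMax_idx (Ω : Set (Ed d)) (f : Ed d → ℝ) (n : ℕ) :
    Measurable fun y : Ed d => gridMax Ω f n (idx (-n) y) :=
  measurable_comp_idx _ _

theorem measurable_excess (Ω : Set (Ed d)) (f : Ed d → ℝ) (s : ℤ) (B : ℝ) :
    Measurable (excess Ω f s B) :=
  .iSup fun n => .iSup fun _ => ((measurable_gridMax_idx Ω f n).sub_const B).ennreal_ofReal

theorem setLIntegral_excess_ne_top (hΩ : IsOpen Ω) (hf : LocallyIntegrableOn f Ω)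
    (hvar : var Ω f < ∞) (hQ : m ∈ admSet Ω s) :
    ∫⁻ y in dcube s m, excess Ω f s (level Ω f s m) y ≠ ∞ := by
  set F : ℕ → Ed d → ℝ≥0∞ := fun n y => ⨆ _ : s.natAbs ≤ n,
    ENNReal.ofReal (gridMax Ω f n (idx (-n) y) - level Ω f s m)
  have hF (n : ℕ) : Measurable (F n) :=
    .iSup fun _ => ((measurable_gridMax_idx Ω f n).sub_const _).ennreal_ofReal
  have hmono : ∀ᵐ y ∂volume.restrict (dcube s m), Monotone fun n => F n y := by
    filter_upwards [ae_restrict_mem (measurableSet_dcube s m)] with y hy n n' hnn'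
    refine iSup_le fun hn => le_trans ?_ (le_iSup _ (hn.trans hnn'))
    exact ENNReal.ofReal_le_ofReal (sub_le_sub_right
      (gridMax_mono hf hnn' (by rwa [mem_dcube.1 hy]) hn) _)
  have hfin : gridConst d * d * (ENNReal.ofReal (2 * 2 ^ s) * var Ω f) ≠ ∞ :=
    ENNReal.mul_ne_top gridConst_mul_ne_top (ENNReal.mul_ne_top ENNReal.ofReal_ne_top hvar.ne)
  refine ne_top_of_le_ne_top hfin ?_
  change ∫⁻ y in dcube s m, ⨆ n, F n y ≤ _
  rw [lintegral_iSup' (fun n => (hF n).aemeasurable) hmono]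
  refine iSup_le fun n => ?_
  by_cases hn : s.natAbs ≤ n
  · simpa [F, hn] using setLIntegral_gridMax_sub_level_le hΩ hf hvar (by omega) hQ
  · simp [F, hn]

theorem bddAbove_admAvgs_of_excess_ne_top (hf : LocallyIntegrableOn f Ω) {B : ℝ} {y : Ed d}
    (h : excess Ω f s B y ≠ ∞) : BddAbove (admAvgs Ω f y) := by
  refine ⟨B + (excess Ω f s B y).toReal, ?_⟩
  rintro _ ⟨t, ht, rfl⟩
  have hle : cavg f t (idx t y) ≤ gridMax Ω f (max s.natAbs t.natAbs)
      (idx (-(max s.natAbs t.natAbs : ℕ)) y) := cavg_le_gridMax hf ht (le_max_right _ _)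
  linarith [(ENNReal.ofReal_le_iff_le_toReal h).1
    (le_excess (Ω := Ω) (f := f) (le_max_left s.natAbs t.natAbs) B y)]

theorem ae_bddAbove_admAvgs_dcube (hΩ : IsOpen Ω) (hf : LocallyIntegrableOn f Ω)
    (hvar : var Ω f < ∞) (hQ : m ∈ admSet Ω s) :
    ∀ᵐ y ∂volume.restrict (dcube s m), BddAbove (admAvgs Ω f y) :=
  (ae_lt_top (measurable_excess Ω f s _) (setLIntegral_excess_ne_top hΩ hf hvar hQ)).mono
    fun _ hy => bddAbove_admAvgs_of_excess_ne_top hf hy.ne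

theorem enorm_gridMax_le {y : Ed d} (hf : LocallyIntegrableOn f Ω) (hy : idx s y ∈ admSet Ω s)
    (hn : s.natAbs ≤ n) {B : ℝ} (hB : 0 ≤ B) :
    ‖gridMax Ω f n (idx (-n) y)‖ₑ
      ≤ ENNReal.ofReal (|cavg f s (idx s y)| + B) + excess Ω f s B y := by
  set g := gridMax Ω f n (idx (-n) y)
  have hlower : cavg f s (idx s y) ≤ g := cavg_le_gridMax hf hy hn
  have habs : |g| ≤ |cavg f s (idx s y)| + B + max (g - B) 0 := by
    rw [abs_le]
    constructor
    · linarith [neg_abs_le (cavg f s (idx s y)), le_max_right (g - B) 0]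
    · linarith [abs_nonneg (cavg f s (idx s y)), le_max_left (g - B) 0]
  calc ‖g‖ₑ = ENNReal.ofReal |g| := Real.enorm_eq_ofReal_abs _
    _ ≤ ENNReal.ofReal (|cavg f s (idx s y)| + B + max (g - B) 0) :=
        ENNReal.ofReal_le_ofReal habs
    _ ≤ ENNReal.ofReal (|cavg f s (idx s y)| + B) + ENNReal.ofReal (max (g - B) 0) :=
        ENNReal.ofReal_add_le
    _ ≤ _ := by
        gcongr
        rw [ENNReal.ofReal_max, ENNReal.ofReal_zero, max_eq_left zero_le]
        exact le_excess hn B y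

theorem integrableOn_dyadicMaxFun_dcube (hΩ : IsOpen Ω) (hf : LocallyIntegrableOn f Ω)
    (hvar : var Ω f < ∞) (hQ : m ∈ admSet Ω s) : IntegrableOn (dyadicMaxFun Ω f) (dcube s m) := by
  have hlim : ∀ᵐ y ∂volume.restrict (dcube s m), Tendsto
      (fun n : ℕ => gridMax Ω f n (idx (-n) y)) atTop (𝓝 (dyadicMaxFun Ω f y)) := by
    filter_upwards [ae_restrict_mem (measurableSet_dcube s m),
      ae_bddAbove_admAvgs_dcube hΩ hf hvar hQ] with y hy hb
    exact tendsto_gridMax (s := s) hf (by rwa [mem_dcube.1 hy]) hb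
  have hle : ∀ᵐ y ∂volume.restrict (dcube s m), ‖dyadicMaxFun Ω f y‖ₑ
      ≤ ENNReal.ofReal (|cavg f s m| + level Ω f s m) + excess Ω f s (level Ω f s m) y := by
    filter_upwards [ae_restrict_mem (measurableSet_dcube s m), hlim] with y hy hy'
    refine le_of_tendsto hy'.enorm ?_
    filter_upwards [eventually_ge_atTop s.natAbs] with n hn
    have hbound := enorm_gridMax_le (y := y) hf (by rwa [mem_dcube.1 hy]) hn
      (level_pos Ω f s m).le
    rwa [mem_dcube.1 hy] at hbound
  refine ⟨aestronglyMeasurable_of_tendsto_ae atTop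
    (fun n => (measurable_gridMax_idx Ω f n).aestronglyMeasurable) hlim,
    (lintegral_mono_ae hle).trans_lt ?_⟩
  rw [lintegral_add_left measurable_const, setLIntegral_const, volume_dcube]
  exact ENNReal.add_lt_top.2 ⟨ENNReal.mul_lt_top ENNReal.ofReal_lt_top ENNReal.ofReal_lt_top,
    (setLIntegral_excess_ne_top hΩ hf hvar hQ).lt_top⟩

theorem exists_dist_le_of_mem_dcube (d : ℕ) : ∃ c : ℝ, ∀ (s : ℤ) (m : Cell d),
    ∀ y ∈ dcube s m, ∀ z ∈ dcube s m, dist y z ≤ c * 2 ^ s := by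
  obtain ⟨c, hc⟩ : ∃ c, AntilipschitzWith c (WithLp.ofLp : Ed d → Fin d → ℝ) :=
    ⟨_, PiLp.antilipschitzWith_ofLp 2 _⟩
  refine ⟨c, fun s m y hy z hz => (hc.le_mul_dist y z).trans ?_⟩
  gcongr
  refine (dist_pi_le_iff (by positivity)).2 fun i => ?_
  obtain ⟨hy₁, hy₂⟩ := hy i
  obtain ⟨hz₁, hz₂⟩ := hz i
  rw [Real.dist_eq, abs_le]
  constructor <;> linarith

theorem tendsto_two_zpow_neg : Tendsto (fun n : ℕ => (2 : ℝ) ^ (-n : ℤ)) atTop (𝓝 0) := by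
  simpa using tendsto_pow_atTop_nhds_zero_of_lt_one (r := (2 : ℝ)⁻¹) (by norm_num) (by norm_num)

theorem eventually_idx_mem_admSet (hΩ : IsOpen Ω) (hK : IsCompact K) (hKΩ : K ⊆ Ω) :
    ∀ᶠ n : ℕ in atTop, ∀ y ∈ K, idx (-n) y ∈ admSet Ω (-n) := by
  obtain ⟨δ, hδ, hδΩ⟩ := hK.exists_cthickening_subset_open hΩ hKΩ
  obtain ⟨c, hcd⟩ := exists_dist_le_of_mem_dcube d
  have hlim : Tendsto (fun n : ℕ => c * (2 : ℝ) ^ (-n : ℤ)) atTop (𝓝 0) := by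
    simpa using tendsto_two_zpow_neg.const_mul c
  filter_upwards [hlim.eventually (gt_mem_nhds hδ)] with n hn y hy
  refine (closure_minimal (fun z hz => ?_) isClosed_closedBall).trans
    ((closedBall_subset_cthickening hy δ).trans hδΩ)
  exact mem_closedBall.2 ((hcd _ _ z hz y (mem_dcube.2 rfl)).trans hn.le)

theorem exists_finite_dcube_cover (hΩ : IsOpen Ω) (hK : IsCompact K) (hKΩ : K ⊆ Ω) :
    ∃ (s : ℤ) (I : Set (Cell d)), I.Finite ∧ I ⊆ admSet Ω s ∧ K ⊆ ⋃ m ∈ I, dcube s m := by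
  obtain ⟨n, hn⟩ := (eventually_idx_mem_admSet hΩ hK hKΩ).exists
  exact ⟨-n, idx (-n) '' K, finite_idx_image _ hK.isBounded, image_subset_iff.2 hn,
    fun y hy => mem_iUnion₂.2 ⟨_, mem_image_of_mem _ hy, mem_dcube.2 rfl⟩⟩

theorem integrableOn_dyadicMaxFun (hΩ : IsOpen Ω) (hf : LocallyIntegrableOn f Ω)
    (hvar : var Ω f < ∞) (hK : IsCompact K) (hKΩ : K ⊆ Ω) :
    IntegrableOn (dyadicMaxFun Ω f) K := by
  obtain ⟨s, I, hI, hadm, hcover⟩ := exists_finite_dcube_cover hΩ hK hKΩ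
  exact ((integrableOn_finite_biUnion hI).2 fun m hm =>
    integrableOn_dyadicMaxFun_dcube hΩ hf hvar (hadm hm)).mono_set hcover

theorem ae_bddAbove_admAvgs (hΩ : IsOpen Ω) (hf : LocallyIntegrableOn f Ω)
    (hvar : var Ω f < ∞) (hK : IsCompact K) (hKΩ : K ⊆ Ω) :
    ∀ᵐ y ∂volume.restrict K, BddAbove (admAvgs Ω f y) := by
  obtain ⟨s, I, hI, hadm, hcover⟩ := exists_finite_dcube_cover hΩ hK hKΩ
  exact ae_restrict_of_ae_restrict_of_subset hcover ((ae_restrict_biUnion_iff _ hI.countable _).2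
    fun m hm => ae_bddAbove_admAvgs_dcube hΩ hf hvar (hadm hm))

theorem locallyIntegrableOn_dyadicMaxFun (hΩ : IsOpen Ω) (hf : LocallyIntegrableOn f Ω)
    (hvar : var Ω f < ∞) : LocallyIntegrableOn (dyadicMaxFun Ω f) Ω :=
  (locallyIntegrableOn_iff hΩ.isLocallyClosed).2 fun _ hKΩ hK =>
    integrableOn_dyadicMaxFun hΩ hf hvar hK hKΩ

end Integrable

/-! ### The variation of the maximal function -/

section DifferenceQuotient

theorem le_varDensity {S : Set (Cell d)} (u : Cell d → ℝ) {x : Cell d} {j : Fin d} (hx : x ∈ S)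
    (hj : nbr (1, j) x ∈ S) : ENNReal.ofReal |u (nbr (1, j) x) - u x| ≤ varDensity S u x := by
  unfold varDensity
  refine le_trans (le_of_eq ?_) (Finset.single_le_sum (fun _ _ => zero_le) (Finset.mem_univ j))
  exact (if_pos ⟨hx, hj⟩).symm

theorem integral_mul_comp_add_sub {E : Type*} [NormedAddCommGroup E] [MeasurableSpace E]
    [BorelSpace E] {μ : Measure E} [μ.IsAddRightInvariant] {u ψ : E → ℝ}
    (hu : LocallyIntegrable u μ) (hψ : Continuous ψ) (hc : HasCompactSupport ψ) (v : E) :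
    ∫ y, u y * (ψ (y + v) - ψ y) ∂μ = ∫ y, (u (y - v) - u y) * ψ y ∂μ := by
  have h_int : Integrable (fun y => u y * ψ y) μ :=
    hu.integrable_smul_right_of_hasCompactSupport hψ hc
  have h_int_add : Integrable (fun y => u y * ψ (y + v)) μ :=
    hu.integrable_smul_right_of_hasCompactSupport (hψ.comp (continuous_id.add continuous_const))
      (hc.comp_homeomorph (Homeomorph.addRight v))
  have h_int_sub : Integrable (fun y => u (y - v) * ψ y) μ := by
    simpa using h_int_add.comp_sub_right v
  simp only [mul_sub, sub_mul]
  rw [integral_sub h_int_add h_int, integral_sub h_int_sub h_int, ← integral_sub_right_eq_self _ v]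
  simp

theorem enorm_comp_idx_sub_mul_le {S : Set (Cell d)} (u : Cell d → ℝ) {s : ℤ} {j : Fin d}
    {y : Ed d} {t : ℝ} (ht : |t| ≤ 1) (hy : idx s y ∈ S)
    (hy' : idx s (y - EuclideanSpace.single j (2 ^ s)) ∈ S) :
    ‖(u (idx s (y - EuclideanSpace.single j (2 ^ s))) - u (idx s y)) * t‖ₑ
      ≤ varDensity S u (idx s (y - EuclideanSpace.single j (2 ^ s))) := by
  have hnbr : nbr (1, j) (idx s (y - EuclideanSpace.single j (2 ^ s))) = idx s y := by
    rw [← idx_add_single, sub_add_cancel]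
  refine le_trans ?_ (le_varDensity u hy' (hnbr ▸ hy))
  rw [hnbr, Real.enorm_eq_ofReal_abs, abs_mul, abs_sub_comm]
  exact ENNReal.ofReal_le_ofReal (mul_le_of_le_one_right (abs_nonneg _) ht)

theorem enorm_integral_comp_idx_mul_sub_le {S : Set (Cell d)} (u : Cell d → ℝ) (s : ℤ) (j : Fin d)
    {ψ : Ed d → ℝ} (hψ : Continuous ψ) (hc : HasCompactSupport ψ) (hψ₁ : ∀ x, |ψ x| ≤ 1)
    (hS : ∀ y ∈ tsupport ψ, idx s y ∈ S ∧ idx s (y - EuclideanSpace.single j (2 ^ s)) ∈ S) :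
    ‖∫ y, u (idx s y) * (ψ (y + EuclideanSpace.single j (2 ^ s)) - ψ y)‖ₑ
      ≤ gridVar S u * ENNReal.ofReal (((2 : ℝ) ^ s) ^ d) := by
  rw [integral_mul_comp_add_sub (locallyIntegrable_comp_idx s u) hψ hc]
  set v : Ed d := EuclideanSpace.single j (2 ^ s)
  calc ‖∫ y, (u (idx s (y - v)) - u (idx s y)) * ψ y‖ₑ
      ≤ ∫⁻ y, ‖(u (idx s (y - v)) - u (idx s y)) * ψ y‖ₑ := enorm_integral_le_lintegral_enorm _
    _ ≤ ∫⁻ y, varDensity S u (idx s (y - v)) := by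
        refine lintegral_mono fun y => ?_
        by_cases hy : y ∈ tsupport ψ
        · exact enorm_comp_idx_sub_mul_le u (hψ₁ y) (hS y hy).1 (hS y hy).2
        · simp [image_eq_zero_of_notMem_tsupport hy]
    _ = ∫⁻ y : Ed d, varDensity S u (idx s y) :=
        lintegral_sub_right_eq_self (fun y => varDensity S u (idx s y)) v
    _ = _ := lintegral_comp_idx s _

variable {E : Type*} [NormedAddCommGroup E] [NormedSpace ℝ E] {ψ : E → ℝ}

theorem abs_diffQuotient_le {L : NNReal} (hψ : LipschitzWith L ψ) {t : ℝ} (ht : 0 < t) (x e : E) :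
    |t⁻¹ * (ψ (x + t • e) - ψ x)| ≤ L * ‖e‖ := by
  have hdist := hψ.dist_le_mul (x + t • e) x
  rw [dist_self_add_left, norm_smul, Real.norm_of_nonneg ht.le, Real.dist_eq] at hdist
  rw [abs_mul, abs_inv, abs_of_pos ht, inv_mul_le_iff₀ ht]
  linarith

theorem tendsto_diffQuotient {ι : Type*} {l : Filter ι} {t : ι → ℝ}
    (ht : Tendsto t l (𝓝[>] 0)) {x : E} (hψ : DifferentiableAt ℝ ψ x) (e : E) :
    Tendsto (fun i => (t i)⁻¹ * (ψ (x + t i • e) - ψ x)) l (𝓝 (fderiv ℝ ψ x e)) := by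
  have hinv : Tendsto (fun i => ‖(t i)⁻¹‖) l atTop :=
    tendsto_norm_atTop_atTop.comp (Tendsto.inv_tendsto_nhdsGT_zero ht)
  simpa using hψ.hasFDerivAt.lim e hinv

theorem sub_smul_mem_cthickening_tsupport {e x : E} {t δ : ℝ} (h : |t| * ‖e‖ ≤ δ)
    (hx : x ∈ tsupport ψ) : x - t • e ∈ cthickening δ (tsupport ψ) := by
  refine mem_cthickening_of_dist_le _ x _ _ hx ?_
  rwa [dist_self_sub_left, norm_smul, Real.norm_eq_abs]

theorem comp_add_smul_sub_eq_zero {e x : E} {t δ : ℝ} (h : |t| * ‖e‖ ≤ δ)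
    (hx : x ∉ cthickening δ (tsupport ψ)) : ψ (x + t • e) - ψ x = 0 := by
  have hx₀ : ψ x = 0 :=
    image_eq_zero_of_notMem_tsupport fun h' => hx (self_subset_cthickening _ h')
  have hx₁ : ψ (x + t • e) = 0 := image_eq_zero_of_notMem_tsupport fun h' => hx <| by
    simpa using sub_smul_mem_cthickening_tsupport h h'
  rw [hx₀, hx₁, sub_zero]

end DifferenceQuotient

section Variation

variable {Ω : Set (Ed d)} {f : Ed d → ℝ} {K : Set (Ed d)}

theorem exists_eventually_abs_gridMax_le (hΩ : IsOpen Ω) (hf : LocallyIntegrableOn f Ω)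
    (hK : IsCompact K) (hKΩ : K ⊆ Ω) :
    ∃ c, ∀ᶠ n : ℕ in atTop, ∀ y ∈ K, BddAbove (admAvgs Ω f y) →
      |gridMax Ω f n (idx (-n) y)| ≤ c + |dyadicMaxFun Ω f y| := by
  obtain ⟨n₀, hn₀⟩ := (eventually_idx_mem_admSet hΩ hK hKΩ).exists
  obtain ⟨c, hc⟩ := exists_abs_comp_idx_le (-n₀) (cavg f (-n₀)) hK.isBounded
  refine ⟨c, ?_⟩
  filter_upwards [eventually_ge_atTop n₀] with n hn y hy hb
  have hlower : cavg f (-n₀) (idx (-n₀) y) ≤ gridMax Ω f n (idx (-n) y) :=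
    cavg_le_gridMax hf (hn₀ y hy) (by omega)
  have hupper : gridMax Ω f n (idx (-n) y) ≤ dyadicMaxFun Ω f y :=
    ge_of_tendsto (tendsto_gridMax hf (hn₀ y hy) hb) <| by
      filter_upwards [eventually_ge_atTop n] with n' hn'
      exact gridMax_mono hf hn' (hn₀ y hy) (by omega)
  have habs := abs_le.1 (hc y hy)
  rw [abs_le]
  constructor
  · linarith [habs.1, abs_nonneg (dyadicMaxFun Ω f y)]
  · linarith [habs.1, habs.2, le_abs_self (dyadicMaxFun Ω f y)]

theorem tendsto_setIntegral_gridMax_mul (hΩ : IsOpen Ω) (hf : LocallyIntegrableOn f Ω)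
    (hvar : var Ω f < ∞) (hK : IsCompact K) (hKΩ : K ⊆ Ω) {D : ℕ → Ed d → ℝ} {D' : Ed d → ℝ}
    {L : ℝ} (hDm : ∀ n, Continuous (D n)) (hDL : ∀ n y, |D n y| ≤ L)
    (hD : ∀ y, Tendsto (fun n => D n y) atTop (𝓝 (D' y))) :
    Tendsto (fun n : ℕ => ∫ y in K, gridMax Ω f n (idx (-n) y) * D n y) atTop
      (𝓝 (∫ y in K, dyadicMaxFun Ω f y * D' y)) := by
  obtain ⟨n₀, hn₀⟩ := (eventually_idx_mem_admSet hΩ hK hKΩ).exists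
  obtain ⟨c, hc⟩ := exists_eventually_abs_gridMax_le hΩ hf hK hKΩ
  have hae := (ae_bddAbove_admAvgs hΩ hf hvar hK hKΩ).and (ae_restrict_mem hK.measurableSet)
  refine tendsto_integral_filter_of_dominated_convergence
    (fun y => (c + |dyadicMaxFun Ω f y|) * L) ?_ ?_ ?_ ?_
  · exact Eventually.of_forall fun n => (measurable_gridMax_idx Ω f n).aestronglyMeasurable.mul
      (hDm n).aestronglyMeasurable
  · filter_upwards [hc] with n hn
    filter_upwards [hae] with y ⟨hb, hy⟩
    rw [norm_mul]
    exact mul_le_mul (hn y hy hb) (hDL n y) (norm_nonneg _)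
      ((abs_nonneg _).trans (hn y hy hb))
  · exact ((integrableOn_const (hs := hK.measure_lt_top.ne)).add
      (integrableOn_dyadicMaxFun hΩ hf hvar hK hKΩ).abs).mul_const _
  · filter_upwards [hae] with y ⟨hb, hy⟩
    exact (tendsto_gridMax hf (hn₀ y hy) hb).mul (hD y)

theorem integral_gridMax_mul_diffQuotient_le (hΩ : IsOpen Ω) (hf : LocallyIntegrableOn f Ω)
    (hvar : var Ω f < ∞) {ψ : Ed d → ℝ} (hψ : Continuous ψ) (hc : HasCompactSupport ψ)
    (hψ₁ : ∀ x, |ψ x| ≤ 1) {n : ℕ} {j : Fin d}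
    (hadm : ∀ y ∈ tsupport ψ, idx (-n) y ∈ admSet Ω (-n) ∧
      idx (-n) (y - (2 : ℝ) ^ (-n : ℤ) • EuclideanSpace.single j 1) ∈ admSet Ω (-n)) :
    ∫ y, gridMax Ω f n (idx (-n) y) * (((2 : ℝ) ^ (-n : ℤ))⁻¹ *
        (ψ (y + (2 : ℝ) ^ (-n : ℤ) • EuclideanSpace.single j 1) - ψ y))
      ≤ (gridConst d * d * var Ω f).toReal := by
  have hpos : (0 : ℝ) < 2 ^ (-n : ℤ) := by positivity
  have hfin : gridConst d * d * var Ω f ≠ ∞ := ENNReal.mul_ne_top gridConst_mul_ne_top hvar.ne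
  have hsingle : (2 : ℝ) ^ (-n : ℤ) • EuclideanSpace.single j (1 : ℝ) =
      EuclideanSpace.single j (2 ^ (-n : ℤ)) := by
    ext i; simp
  rw [hsingle] at hadm ⊢
  have hbound := (enorm_integral_comp_idx_mul_sub_le (gridMax Ω f n) (-n) j hψ hc hψ₁ hadm).trans
    (gridVar_gridMax_mul_le hΩ hf hvar n)
  rw [mul_left_comm, Real.enorm_eq_ofReal_abs,
    ENNReal.ofReal_le_iff_le_toReal (ENNReal.mul_ne_top ENNReal.ofReal_ne_top hfin),
    ENNReal.toReal_mul, ENNReal.toReal_ofReal hpos.le] at hbound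
  simp only [mul_left_comm _ ((2 : ℝ) ^ (-n : ℤ))⁻¹]
  rw [integral_const_mul, inv_mul_le_iff₀ hpos]
  exact (le_abs_self _).trans hbound

theorem integral_dyadicMaxFun_mul_fderiv_le (hΩ : IsOpen Ω) (hf : LocallyIntegrableOn f Ω)
    (hvar : var Ω f < ∞) {ψ : Ed d → ℝ} (hψ : ContDiff ℝ 1 ψ) (hc : HasCompactSupport ψ)
    (hs : tsupport ψ ⊆ Ω) (hψ₁ : ∀ x, |ψ x| ≤ 1) (j : Fin d) :
    ∫ x in Ω, dyadicMaxFun Ω f x * fderiv ℝ ψ x (EuclideanSpace.single j 1)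
      ≤ (gridConst d * d * var Ω f).toReal := by
  obtain ⟨δ, hδ, hδΩ⟩ := hc.isCompact.exists_cthickening_subset_open hΩ hs
  obtain ⟨L, hL⟩ := hψ.lipschitzWith_of_hasCompactSupport hc one_ne_zero
  set e : Ed d := EuclideanSpace.single j 1
  set K := cthickening δ (tsupport ψ)
  have hK : IsCompact K := hc.isCompact.cthickening
  have hsK : tsupport ψ ⊆ K := self_subset_cthickening _
  have hzero : Tendsto (fun n : ℕ => (2 : ℝ) ^ (-n : ℤ)) atTop (𝓝[>] 0) :=
    tendsto_nhdsWithin_iff.2 ⟨tendsto_two_zpow_neg, .of_forall fun n => by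
      rw [mem_Ioi]; positivity⟩
  have hlim := tendsto_setIntegral_gridMax_mul hΩ hf hvar hK hδΩ
    (D := fun n y => ((2 : ℝ) ^ (-n : ℤ))⁻¹ * (ψ (y + (2 : ℝ) ^ (-n : ℤ) • e) - ψ y))
    (fun n => by have := hψ.continuous; fun_prop)
    (fun n y => abs_diffQuotient_le hL (by positivity) y e)
    (fun y => tendsto_diffQuotient hzero (hψ.differentiable one_ne_zero y) e)
  have hΩK : ∫ x in Ω, dyadicMaxFun Ω f x * fderiv ℝ ψ x e
      = ∫ x in K, dyadicMaxFun Ω f x * fderiv ℝ ψ x e := by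
    refine setIntegral_eq_of_subset_of_forall_sdiff_eq_zero hΩ.measurableSet hδΩ fun x hx => ?_
    rw [image_eq_zero_of_notMem_tsupport fun hx' =>
      hx.2 (hsK (tsupport_fderiv_apply_subset ℝ e hx')), mul_zero]
  rw [hΩK]
  refine le_of_tendsto hlim ?_
  filter_upwards [tendsto_two_zpow_neg.eventually (gt_mem_nhds hδ),
    eventually_idx_mem_admSet hΩ hK hδΩ] with n hn hadm
  have hnδ : |(2 : ℝ) ^ (-n : ℤ)| * ‖e‖ ≤ δ := by simpa [e] using hn.le
  rw [setIntegral_eq_integral_of_forall_compl_eq_zero fun y hy => by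
    rw [comp_add_smul_sub_eq_zero hnδ hy, mul_zero, mul_zero]]
  exact integral_gridMax_mul_diffQuotient_le hΩ hf hvar hψ.continuous hc hψ₁ fun y hy =>
    ⟨hadm y (hsK hy), hadm _ (sub_smul_mem_cthickening_tsupport hnδ hy)⟩

theorem divergence_eq_sum_fderiv_apply {φ : Ed d → Ed d} {x : Ed d}
    (hφ : DifferentiableAt ℝ φ x) :
    divergence φ x = ∑ i, fderiv ℝ (fun y => φ y i) x (EuclideanSpace.single i 1) := by
  refine Finset.sum_congr rfl fun i _ => ?_
  have hφi : HasFDerivAt (fun y => φ y i) _ x :=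
    (EuclideanSpace.proj (𝕜 := ℝ) i).hasFDerivAt.comp x hφ.hasFDerivAt
  rw [hφi.fderiv]
  rfl

theorem tsupport_apply_subset (φ : Ed d → Ed d) (i : Fin d) :
    tsupport (fun y => φ y i) ⊆ tsupport φ :=
  closure_mono fun y hy hφ => hy (by simp [hφ])

theorem integrableOn_dyadicMaxFun_mul_fderiv (hΩ : IsOpen Ω) (hf : LocallyIntegrableOn f Ω)
    (hvar : var Ω f < ∞) {ψ : Ed d → ℝ} (hψ : ContDiff ℝ 1 ψ) (hc : HasCompactSupport ψ)
    (hs : tsupport ψ ⊆ Ω) (e : Ed d) :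
    IntegrableOn (fun x => dyadicMaxFun Ω f x * fderiv ℝ ψ x e) Ω := by
  have hcont : Continuous fun x => fderiv ℝ ψ x e :=
    (hψ.continuous_fderiv one_ne_zero).clm_apply continuous_const
  obtain ⟨C, hC⟩ := (hc.fderiv_apply ℝ e).exists_bound_of_continuous hcont
  have h_int := (integrableOn_dyadicMaxFun hΩ hf hvar hc.isCompact hs).mul_bdd
    hcont.aestronglyMeasurable (Eventually.of_forall hC)
  refine Integrable.integrableOn ((integrableOn_iff_integrable_of_support_subset ?_).1 h_int)
  intro x hx
  by_contra hxψ
  have hzero : fderiv ℝ ψ x e = 0 :=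
    image_eq_zero_of_notMem_tsupport (f := fun x => fderiv ℝ ψ x e) fun hx' =>
      hxψ (tsupport_fderiv_apply_subset ℝ e hx')
  exact hx (by simp only [hzero, mul_zero])

theorem var_dyadicMaxFun_le (hΩ : IsOpen Ω) (hf : LocallyIntegrableOn f Ω)
    (hvar : var Ω f < ∞) :
    var Ω (dyadicMaxFun Ω f) ≤ d * (gridConst d * d) * var Ω f := by
  refine iSup₂_le fun φ ⟨hφ, hc, hs, hφ₁⟩ => ?_
  have hfin : gridConst d * d * var Ω f ≠ ∞ := ENNReal.mul_ne_top gridConst_mul_ne_top hvar.ne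
  have hφi (i : Fin d) : ContDiff ℝ 1 fun y => φ y i :=
    (EuclideanSpace.proj (𝕜 := ℝ) i).contDiff.comp hφ
  have hsi (i : Fin d) : tsupport (fun y => φ y i) ⊆ Ω := (tsupport_apply_subset φ i).trans hs
  have hci (i : Fin d) : HasCompactSupport fun y => φ y i :=
    hc.isCompact.of_isClosed_subset (isClosed_tsupport _) (tsupport_apply_subset φ i)
  have hle : ∫ x in Ω, dyadicMaxFun Ω f x * divergence φ x
      ≤ d * (gridConst d * d * var Ω f).toReal := by
    simp only [divergence_eq_sum_fderiv_apply (hφ.differentiable one_ne_zero _), Finset.mul_sum]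
    rw [integral_finsetSum _ fun i _ =>
      integrableOn_dyadicMaxFun_mul_fderiv hΩ hf hvar (hφi i) (hci i) (hsi i) _]
    refine (Finset.sum_le_sum fun i _ => integral_dyadicMaxFun_mul_fderiv_le hΩ hf hvar (hφi i)
      (hci i) (hsi i) (fun y => (PiLp.norm_apply_le (φ y) i).trans (hφ₁ y)) i).trans_eq ?_
    simp
  refine (ENNReal.ofReal_le_ofReal hle).trans_eq ?_
  rw [ENNReal.ofReal_mul (by positivity), ENNReal.ofReal_natCast, ENNReal.ofReal_toReal hfin,
    mul_assoc (d : ℝ≥0∞)]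

end Variation

end DyadicGrid

/-- Variation of the dyadic maximal function: there is `C = C_d < ∞` such that for every
open `Ω ⊆ ℝ^d` and every `f ∈ L¹_loc(Ω)` with `var_Ω f < ∞`, also `M_Ω f ∈ L¹_loc(Ω)` and
`var_Ω (M_Ω f) ≤ C · var_Ω f`. -/
theorem variation_of_dyadic_maximal_function (d : ℕ) (hd : 1 ≤ d) :
    ∃ C : ℝ≥0∞, C ≠ ∞ ∧
      ∀ (Ω : Set (Ed d)), IsOpen Ω → ∀ f : Ed d → ℝ,
        LocallyIntegrableOn f Ω volume → var Ω f < ∞ →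
          LocallyIntegrableOn (dyadicMaxFun Ω f) Ω volume ∧
          var Ω (dyadicMaxFun Ω f) ≤ C * var Ω f := by
  exact ⟨d * (DyadicGrid.gridConst d * d),
    ENNReal.mul_ne_top (ENNReal.natCast_ne_top d) DyadicGrid.gridConst_mul_ne_top,
    fun Ω hΩ f hf hvar => ⟨DyadicGrid.locallyIntegrableOn_dyadicMaxFun hΩ hf hvar,
      DyadicGrid.var_dyadicMaxFun_le hΩ hf hvar⟩⟩

end
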